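/- arXiv:1503.08270 — 3 statements merged into one kernel-verified Lean document; each statement's English description precedes it below -/
import Mathlib

section
/- The number of latin squares of order d satisfies L(d) ≥ d!^{2d} / d^{d^2}. -/
/-- `T` is a latin square of order `d`: every row and every column is a permutation. -/
def IsLatinSquare {d : ℕ} (T : Fin d → Fin d → Fin d) : Prop :=
  (∀ i, Function.Injective (T i)) ∧ ∀ j, Function.Injective (fun i => T i j)

/-- The number of latin squares of order `d`. -/
noncomputable def numLatinSquares (d : ℕ) : ℕ :=
  {T : Fin d → Fin d → Fin d | IsLatinSquare T}.ncard
open Polynomial in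
theorem vdw_coeff_prod {K ι : Type*} [Field K] (s : Finset ι) (f : ι → K[X]) (d : ι → ℕ)
    (h : ∀ i ∈ s, (f i).natDegree ≤ d i) :
    (∏ i ∈ s, f i).natDegree ≤ ∑ i ∈ s, d i ∧
    (∏ i ∈ s, f i).coeff (∑ i ∈ s, d i) = ∏ i ∈ s, (f i).coeff (d i) := by
  classical
  induction s using Finset.induction_on with
  | empty => simp
  | insert a s ha ih =>
    obtain ⟨h1, h2⟩ := ih (fun i hi => h i (Finset.mem_insert_of_mem hi))
    have h3 := h a (Finset.mem_insert_self _ _)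
    rw [Finset.prod_insert ha, Finset.sum_insert ha, Finset.prod_insert ha]
    exact ⟨Polynomial.natDegree_mul_le_of_le h3 h1, by
      rw [Polynomial.coeff_mul_add_eq_of_natDegree_le h3 h1, h2]⟩

/-- Directional derivative of a multivariate polynomial. -/
noncomputable def vdwD {ι : Type*} [Fintype ι] (a : ι → ℝ) (G : MvPolynomial ι ℝ) :
    MvPolynomial ι ℝ := ∑ i, MvPolynomial.C (a i) * MvPolynomial.pderiv i G

/-- Restriction of a multivariate polynomial to a line. -/
noncomputable def vdwL {K ι : Type*} [Field K] [Algebra ℝ K] (z : ι → K) (a : ι → ℝ)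
    (G : MvPolynomial ι ℝ) : Polynomial K :=
  MvPolynomial.aeval
    (fun i => Polynomial.C (z i) + Polynomial.C (algebraMap ℝ K (a i)) * Polynomial.X) G

section
variable {K ι : Type*} [Field K] [Algebra ℝ K] [Fintype ι]

theorem vdwL_eval (z : ι → K) (a : ι → ℝ) (G : MvPolynomial ι ℝ) (t : K) :
    (vdwL z a G).eval t = MvPolynomial.aeval (fun i => z i + t * algebraMap ℝ K (a i)) G := by
  unfold vdwL
  induction G using MvPolynomial.induction_on with
  | C r => simp [Polynomial.algebraMap_apply]
  | add p q hp hq => simp [hp, hq]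
  | mul_X p i hp => simp only [map_mul, Polynomial.eval_mul, hp, MvPolynomial.aeval_X]; simp [mul_comm t]

theorem vdwL_deriv (z : ι → K) (a : ι → ℝ) (G : MvPolynomial ι ℝ) :
    Polynomial.derivative (vdwL z a G) = vdwL z a (vdwD a G) := by
  classical
  unfold vdwL vdwD
  induction G using MvPolynomial.induction_on with
  | C r => simp [Polynomial.algebraMap_apply]
  | add p q hp hq => simp [hp, hq, mul_add, Finset.sum_add_distrib]
  | mul_X p i hp =>
    simp only [map_mul, MvPolynomial.aeval_X, Polynomial.derivative_mul, hp]
    have h1 : ∀ j, MvPolynomial.C (a j) * MvPolynomial.pderiv j (p * MvPolynomial.X i) =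
        MvPolynomial.C (a j) * MvPolynomial.pderiv j p * MvPolynomial.X i +
        (if j = i then MvPolynomial.C (a j) * p else 0) := by
      intro j
      rw [MvPolynomial.pderiv_mul, MvPolynomial.pderiv_X, Pi.single_apply]
      by_cases h : i = j
      · subst h; simp; ring
      · rw [if_neg h, if_neg (Ne.symm h)]; ring
    simp_rw [h1]
    rw [Finset.sum_add_distrib, ← Finset.sum_mul, Finset.sum_ite_eq' Finset.univ i]
    simp only [Finset.mem_univ, if_true, map_add, map_mul, MvPolynomial.aeval_X,
      MvPolynomial.aeval_C, Polynomial.algebraMap_apply, Polynomial.derivative_add,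
      Polynomial.derivative_C, Polynomial.derivative_mul, Polynomial.derivative_X]
    ring

theorem vdwL_degree (z : ι → K) (a : ι → ℝ) {G : MvPolynomial ι ℝ} {m : ℕ}
    (hG : G.IsHomogeneous m) :
    (vdwL z a G).natDegree ≤ m ∧
    (vdwL z a G).coeff m = algebraMap ℝ K (MvPolynomial.eval a G) := by
  have key : ∀ d ∈ G.support, (∏ i, (Polynomial.C (z i) +
      Polynomial.C (algebraMap ℝ K (a i)) * Polynomial.X) ^ d i).natDegree ≤ m ∧
      (∏ i, (Polynomial.C (z i) +
      Polynomial.C (algebraMap ℝ K (a i)) * Polynomial.X) ^ d i).coeff m =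
      ∏ i, (algebraMap ℝ K (a i)) ^ d i := by
    intro d hd
    have hdm : ∑ i, d i = m := by
      rw [hG.degree_eq_sum_deg_support hd]
      exact (Finset.sum_subset (Finset.subset_univ _) (by simp)).symm
    have h1 : ∀ i, (Polynomial.C (z i) +
      Polynomial.C (algebraMap ℝ K (a i)) * Polynomial.X).natDegree ≤ 1 := fun i => by
        rw [add_comm]; exact Polynomial.natDegree_linear_le
    have := vdw_coeff_prod Finset.univ (fun i => (Polynomial.C (z i) +
      Polynomial.C (algebraMap ℝ K (a i)) * Polynomial.X) ^ d i) d
      (fun i _ => by simpa using Polynomial.natDegree_pow_le_of_le (d i) (h1 i))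
    rw [hdm] at this
    refine ⟨this.1, this.2.trans (Finset.prod_congr rfl fun i _ => ?_)⟩
    have := Polynomial.coeff_pow_of_natDegree_le (m := d i) (h1 i)
    simp only [mul_one] at this
    rw [this]
    simp
  unfold vdwL
  rw [MvPolynomial.aeval_def, MvPolynomial.eval₂_eq', MvPolynomial.eval_eq']
  constructor
  · apply Polynomial.natDegree_sum_le_of_forall_le
    intro d hd
    rw [Polynomial.algebraMap_apply]
    exact (Polynomial.natDegree_C_mul_le _ _).trans (key d hd).1
  · rw [Polynomial.finsetSum_coeff, map_sum]
    refine Finset.sum_congr rfl fun d hd => ?_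
    rw [Polynomial.algebraMap_apply, Polynomial.coeff_C_mul, (key d hd).2]
    simp

theorem vdwL_map (v : ι → ℝ) (a : ι → ℝ) (G : MvPolynomial ι ℝ) :
    (vdwL v a G).map (algebraMap ℝ K) = vdwL (fun i => algebraMap ℝ K (v i)) a G := by
  unfold vdwL
  induction G using MvPolynomial.induction_on with
  | C r => simp [Polynomial.algebraMap_apply]
  | add p q hp hq => simp only [map_add, Polynomial.map_add, hp, hq]
  | mul_X p i hp => simp only [map_mul, Polynomial.map_mul, hp, MvPolynomial.aeval_X]; simp

theorem vdwD_hom (a : ι → ℝ) {G : MvPolynomial ι ℝ} {m : ℕ} (hG : G.IsHomogeneous (m+1)) :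
    (vdwD a G).IsHomogeneous m := by
  unfold vdwD
  apply MvPolynomial.IsHomogeneous.sum
  intro i _
  exact (hG.pderiv (i := i)).C_mul _

end

/-- Stability plus positivity. -/
structure VdwGood {ι : Type*} (m : ℕ) (G : MvPolynomial ι ℝ) : Prop where
  hom : G.IsHomogeneous m
  stable : ∀ z : ι → ℂ, (∀ i, 0 < (z i).im) → MvPolynomial.aeval z G ≠ 0
  pos : ∀ v : ι → ℝ, (∀ i, 0 < v i) → 0 < MvPolynomial.eval v G

theorem vdw_natDegree {K ι : Type*} [Field K] [Algebra ℝ K] [Fintype ι] {m : ℕ}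
    {G : MvPolynomial ι ℝ} (hG : VdwGood m G)
    {a : ι → ℝ} (ha : ∀ i, 0 < a i) (z : ι → K) : (vdwL z a G).natDegree = m := by
  obtain ⟨h1, h2⟩ := vdwL_degree z a hG.hom
  apply le_antisymm h1
  apply Polynomial.le_natDegree_of_ne_zero
  rw [h2]
  simpa using (hG.pos a ha).ne'

theorem vdw_splits {ι : Type*} [Fintype ι] {m : ℕ}
    {G : MvPolynomial ι ℝ} (hG : VdwGood m G)
    {a : ι → ℝ} (ha : ∀ i, 0 < a i) (v : ι → ℝ) : (vdwL v a G).Splits := by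
  apply Polynomial.Splits.of_splits_map (algebraMap ℝ ℂ) (IsAlgClosed.splits _)
  intro r hr
  have hr2 := Polynomial.isRoot_of_mem_roots hr
  have key : ∀ s : ℂ, 0 < s.im → ((vdwL v a G).map (algebraMap ℝ ℂ)).eval s ≠ 0 := by
    intro s hs
    rw [vdwL_map, vdwL_eval]
    apply hG.stable
    intro i
    simpa using mul_pos hs (ha i)
  have him : r.im = 0 := by
    rcases lt_trichotomy r.im 0 with h | h | h
    · exfalso
      apply key (starRingEnd ℂ r) (by simpa using h)
      have h5 : (starRingEnd ℂ) (((vdwL v a G).map (algebraMap ℝ ℂ)).eval r) = 0 := by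
        rw [hr2.eq_zero]; simp
      rw [Polynomial.eval_map, Polynomial.hom_eval₂] at h5
      rw [Polynomial.eval_map, ← h5]
      congr 1
      ext x
      simp
    · exact h
    · exact absurd hr2 (key r h)
  exact ⟨r.re, by apply Complex.ext <;> simp [him]⟩

theorem vdw_root_neg {ι : Type*} [Fintype ι] {m : ℕ}
    {G : MvPolynomial ι ℝ} (hG : VdwGood m G)
    {a : ι → ℝ} (ha : ∀ i, 0 < a i) {v : ι → ℝ} (hv : ∀ i, 0 < v i) :
    ∀ r ∈ (vdwL v a G).roots, r < 0 := by
  intro r hr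
  by_contra! h
  have h1 := (Polynomial.isRoot_of_mem_roots hr).eq_zero
  rw [vdwL_eval] at h1
  have := hG.pos (fun i => v i + r * a i) (fun i => by
    have := mul_nonneg h (ha i).le; linarith [hv i])
  rw [MvPolynomial.aeval_eq_eval] at h1
  simp at h1
  linarith

theorem vdw_multiset_sum_pos {α : Type*} (s : Multiset α) (f : α → ℝ) (hs : s ≠ 0)
    (h : ∀ x ∈ s, 0 < f x) : 0 < (s.map f).sum := by
  induction s using Multiset.induction_on with
  | empty => exact absurd rfl hs
  | cons a s ih =>
    rw [Multiset.map_cons, Multiset.sum_cons]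
    have h1 := h a (by simp)
    by_cases h0 : s = 0
    · simp [h0, h1]
    · linarith [ih h0 (fun x hx => h x (by simp [hx]))]

theorem vdw_good_step {ι : Type*} [Fintype ι] {m : ℕ}
    {G : MvPolynomial ι ℝ} (hG : VdwGood (m+1) G)
    {a : ι → ℝ} (ha : ∀ i, 0 < a i) : VdwGood m (vdwD a G) := by
  refine ⟨vdwD_hom a hG.hom, ?_, ?_⟩
  · intro z hz h0
    have hsp : (vdwL z a G).Splits := IsAlgClosed.splits _
    have e0 : (vdwL z a G).eval 0 ≠ 0 := by
      rw [vdwL_eval]; apply hG.stable; simpa using hz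
    have hroots : (vdwL z a G).roots ≠ 0 :=
      hsp.roots_ne_zero (by rw [vdw_natDegree hG ha]; omega)
    have h1 := hsp.eval_derivative_div_eval_of_ne_zero e0
    rw [vdwL_deriv, vdwL_eval] at h1
    simp only [zero_mul, add_zero, h0, zero_div, zero_sub] at h1
    have h2 := vdw_multiset_sum_pos (vdwL z a G).roots (fun r => (-(1 / (-r)) : ℂ).im) hroots ?_
    · have h3 : ((vdwL z a G).roots.map (fun r => (-(1 / (-r)) : ℂ).im)).sum =
        - (((vdwL z a G).roots.map (fun r => (1 / (-r)) : ℂ → ℂ)).sum).im := by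
        generalize (vdwL z a G).roots = s
        induction s using Multiset.induction_on with
        | empty => simp
        | cons x s ih => 
          rw [Multiset.map_cons, Multiset.sum_cons, ih, Multiset.map_cons, Multiset.sum_cons,
            Complex.add_im, Complex.neg_im]
          ring
      rw [h3, ← h1] at h2
      simp at h2
    · intro r hr
      have hr2 := (Polynomial.isRoot_of_mem_roots hr).eq_zero
      have hneg : r.im < 0 := by
        by_contra! h
        rw [vdwL_eval] at hr2
        refine hG.stable _ ?_ hr2
        intro i
        have := mul_nonneg h (ha i).le
        have := hz i
        simp
        linarith
      have hr0 : r ≠ 0 := by rintro rfl; simp at hneg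
      have := Complex.normSq_pos.2 hr0
      simp [Complex.inv_im]
      exact div_pos (neg_pos.2 hneg) this
  · intro v hv
    have hsp := vdw_splits hG ha v
    have e0 : 0 < (vdwL v a G).eval 0 := by
      rw [vdwL_eval]; simpa [MvPolynomial.aeval_eq_eval] using hG.pos v hv
    have hroots : (vdwL v a G).roots ≠ 0 :=
      hsp.roots_ne_zero (by rw [vdw_natDegree hG ha]; omega)
    have h1 := hsp.eval_derivative_div_eval_of_ne_zero e0.ne'
    have h2 := vdw_multiset_sum_pos (vdwL v a G).roots (fun r => 1 / (0 - r)) hroots (by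
      intro r hr
      have := vdw_root_neg hG ha hv r hr
      apply one_div_pos.2; linarith)
    rw [← h1, vdwL_deriv] at h2
    have h3 := (div_pos_iff_of_pos_right e0).1 h2
    rw [vdwL_eval] at h3
    simpa [MvPolynomial.aeval_eq_eval] using h3

theorem vdw_amgm (s : Multiset ℝ) (h : ∀ x ∈ s, 0 ≤ x) (hc : s.card ≠ 0) :
    s.prod ≤ (s.sum / s.card) ^ s.card := by
  induction s using Quotient.inductionOn with
  | _ l =>
  simp only [Multiset.quot_mk_to_coe, Multiset.prod_coe, Multiset.sum_coe,
    Multiset.coe_card, Multiset.mem_coe] at *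
  have hn : (l.length : ℝ) ≠ 0 := by exact_mod_cast hc
  have h0 : ∀ i : Fin l.length, 0 ≤ l.get i := fun i => h _ (List.get_mem _ _)
  have key := Real.geom_mean_le_arith_mean_weighted (Finset.univ : Finset (Fin l.length))
    (fun _ => ((l.length : ℝ))⁻¹) (fun i => l.get i) (fun _ _ => by positivity)
    (by simp [hn]) (fun i _ => h0 i)
  have k2 := pow_le_pow_left₀ (Finset.prod_nonneg fun i _ => Real.rpow_nonneg (h0 i) _) key l.length
  rw [← Finset.prod_pow, ← Finset.mul_sum] at k2
  have e1 : ∏ i : Fin l.length, (l.get i ^ ((l.length : ℝ))⁻¹) ^ l.length = l.prod := by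
    rw [← Fin.prod_univ_getElem]
    exact Finset.prod_congr rfl fun i _ => Real.rpow_inv_natCast_pow (h0 i) hc
  have e2 : ∑ i : Fin l.length, l.get i = l.sum := by
    rw [← Fin.sum_univ_getElem]; rfl
  rw [e1, e2] at k2
  rwa [div_eq_inv_mul]

theorem vdw_prod_div (s : Multiset ℝ) (t : ℝ) (h : ∀ r ∈ s, r < 0) :
    (s.map (fun r => t - r)).prod =
      (s.map (fun r => 0 - r)).prod * (s.map (fun r => 1 + t * (1 / (0 - r)))).prod := by
  rw [← Multiset.prod_map_mul]
  congr 1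
  apply Multiset.map_congr rfl
  intro r hr
  have h0 := h r hr
  have h1 : (0 - r) * (1 / (0 - r)) = 1 := mul_one_div_cancel (by linarith)
  linear_combination -t * h1

theorem vdw_step_ineq {ι : Type*} [Fintype ι] {k : ℕ}
    {G : MvPolynomial ι ℝ} (hG : VdwGood (k+2) G)
    {a : ι → ℝ} (ha : ∀ i, 0 < a i) {v : ι → ℝ} (hv : ∀ i, 0 < v i) (B : ℝ)
    (hB : ∀ t : ℝ, 0 < t → B * t ≤ MvPolynomial.eval (fun i => v i + t * a i) G) :
    (((k+1 : ℕ) : ℝ) / ((k+2 : ℕ) : ℝ)) ^ (k+1) * B ≤ MvPolynomial.eval v (vdwD a G) := by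
  have hsp := vdw_splits hG ha v
  have e0 : 0 < (vdwL v a G).eval 0 := by
    rw [vdwL_eval]; simpa [MvPolynomial.aeval_eq_eval] using hG.pos v hv
  have hd : 0 < MvPolynomial.eval v (vdwD a G) := (vdw_good_step hG ha).pos v hv
  have h1 := hsp.eval_derivative_div_eval_of_ne_zero e0.ne'
  have hneg := vdw_root_neg hG ha hv
  have hcard : (vdwL v a G).roots.card = k + 2 := by
    rw [← hsp.natDegree_eq_card_roots, vdw_natDegree hG ha]
  have hde : (vdwL v a G).derivative.eval 0 = MvPolynomial.eval v (vdwD a G) := by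
    rw [vdwL_deriv, vdwL_eval]; simp [MvPolynomial.aeval_eq_eval]
  rw [hde] at h1
  set q := MvPolynomial.eval v (vdwD a G) with hq
  set R0 := (vdwL v a G).eval 0 with hR0
  have hs : 0 < q / R0 := div_pos hd e0
  have hup : ∀ t : ℝ, 0 < t → (vdwL v a G).eval t ≤ R0 * (1 + t * (q / R0) / (k+2 : ℕ)) ^ (k+2) := by
    intro t ht
    rw [hsp.eval_eq_prod_roots, vdw_prod_div _ _ hneg, ← mul_assoc, ← hsp.eval_eq_prod_roots]
    apply mul_le_mul_of_nonneg_left _ e0.le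
    have := vdw_amgm ((vdwL v a G).roots.map (fun r => 1 + t * (1 / (0 - r)))) (by
      intro x hx
      obtain ⟨r, hr, rfl⟩ := Multiset.mem_map.1 hx
      have := hneg r hr
      have : 0 < 1 / (0 - r) := one_div_pos.2 (by linarith)
      positivity) (by simp [hcard])
    refine this.trans (le_of_eq ?_)
    rw [Multiset.card_map, hcard, Multiset.sum_map_add, Multiset.sum_map_mul_left, ← h1]
    congr 1
    simp only [Multiset.map_const', Multiset.sum_replicate, hcard, nsmul_eq_mul, mul_one]
    field_simp
  have hk1 : (0:ℝ) < (k+1 : ℕ) := by positivity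
  have hk2 : (0:ℝ) < (k+2 : ℕ) := by positivity
  set t := ((k+2 : ℕ) : ℝ) / ((k+1 : ℕ) * (q / R0)) with ht
  have htp : 0 < t := by positivity
  have hf := (hB t htp).trans (le_of_eq_of_le ?_ (hup t htp))
  · have e1 : 1 + t * (q / R0) / (k+2 : ℕ) = ((k+2 : ℕ) : ℝ) / (k+1 : ℕ) := by
      rw [ht]; field_simp; push_cast; ring
    rw [e1] at hf
    have e2 : R0 * (((k+2 : ℕ) : ℝ) / (k+1 : ℕ)) ^ (k+2) =
      q * (((k+2 : ℕ) : ℝ) / (k+1 : ℕ)) ^ (k+1) * t := by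
      rw [ht, pow_succ]; field_simp
    rw [e2] at hf
    have hf2 := le_of_mul_le_mul_right hf htp
    calc (((k+1 : ℕ) : ℝ) / ((k+2 : ℕ) : ℝ)) ^ (k+1) * B 
        ≤ (((k+1 : ℕ) : ℝ) / ((k+2 : ℕ) : ℝ)) ^ (k+1) * (q * (((k+2 : ℕ) : ℝ) / (k+1 : ℕ)) ^ (k+1)) :=
          mul_le_mul_of_nonneg_left hf2 (by positivity)
      _ = q * ((((k+1 : ℕ) : ℝ) / ((k+2 : ℕ) : ℝ)) * (((k+2 : ℕ) : ℝ) / (k+1 : ℕ))) ^ (k+1) := by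
          rw [mul_pow]; ring
      _ = q := by
        rw [div_mul_div_cancel₀ hk2.ne', div_self hk1.ne']; simp
  · rw [vdwL_eval]; simp [MvPolynomial.aeval_eq_eval]

/-- Iterated directional derivatives of the product of all variables. -/
noncomputable def vdwF {ι : Type*} [Fintype ι] (a : ℕ → ι → ℝ) : ℕ → MvPolynomial ι ℝ
  | 0 => ∏ i, MvPolynomial.X i
  | k + 1 => vdwD (a k) (vdwF a k)

theorem vdwF_good {ι : Type*} [Fintype ι] (a : ℕ → ι → ℝ) (ha : ∀ j i, 0 < a j i) (k : ℕ) :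
    ∀ m, k + m = Fintype.card ι → VdwGood m (vdwF a k) := by
  induction k with
  | zero =>
    intro m hm
    refine ⟨?_, ?_, ?_⟩
    · have := MvPolynomial.IsHomogeneous.prod (R := ℝ) (Finset.univ : Finset ι)
        (fun i => MvPolynomial.X i) (fun _ => 1) (fun i _ => MvPolynomial.isHomogeneous_X _ _)
      simp only [Finset.sum_const, Finset.card_univ, smul_eq_mul, mul_one, ← hm, zero_add] at this
      exact this
    · intro z hz
      simp only [vdwF, map_prod, MvPolynomial.aeval_X]
      rw [Finset.prod_ne_zero_iff]
      intro i _ h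
      have := hz i
      simp [h] at this
    · intro v hv
      simp only [vdwF, map_prod, MvPolynomial.eval_X]
      exact Finset.prod_pos fun i _ => hv i
  | succ k ih =>
    intro m hm
    exact vdw_good_step (ih (m+1) (by omega)) (ha k)

/-- Gurvits' constant. -/
noncomputable def vdwg (m : ℕ) : ℝ := (((m-1 : ℕ) : ℝ) / (m : ℝ)) ^ (m - 1)

theorem vdw_base {ι : Type*} [Fintype ι] (n : ℕ) (a : ℕ → ι → ℝ) (ha : ∀ j i, 0 < a j i)
    (hrow : ∀ i, ∑ j ∈ Finset.range n, a j i = 1) (hcol : ∀ j < n, ∑ i, a j i = 1)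
    (x : ℕ → ℝ) (hx : ∀ j, 0 < x j) :
    ∏ j ∈ Finset.range n, x j ≤ ∏ i, ∑ j ∈ Finset.range n, x j * a j i := by
  calc ∏ j ∈ Finset.range n, x j = ∏ j ∈ Finset.range n, ∏ i, x j ^ a j i := by
        refine Finset.prod_congr rfl fun j hj => ?_
        rw [← Real.rpow_sum_of_pos (hx j), hcol j (Finset.mem_range.1 hj), Real.rpow_one]
    _ = ∏ i, ∏ j ∈ Finset.range n, x j ^ a j i := Finset.prod_comm
    _ ≤ _ := by
      refine Finset.prod_le_prod
        (fun i _ => Finset.prod_nonneg fun j _ => Real.rpow_nonneg (hx j).le _) fun i _ => ?_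
      have := Real.geom_mean_le_arith_mean_weighted (Finset.range n) (fun j => a j i) x
        (fun j _ => (ha j i).le) (hrow i) (fun j _ => (hx j).le)
      simpa only [mul_comm] using this

theorem vdw_cap {ι : Type*} [Fintype ι] (n : ℕ) (hn : Fintype.card ι = n)
    (a : ℕ → ι → ℝ) (ha : ∀ j i, 0 < a j i)
    (hrow : ∀ i, ∑ j ∈ Finset.range n, a j i = 1) (hcol : ∀ j < n, ∑ i, a j i = 1) (k : ℕ) :
    k ≤ n → ∀ x : ℕ → ℝ, (∀ j, 0 < x j) →
    (∏ j ∈ Finset.range k, vdwg (n - j)) * ∏ j ∈ Finset.Ico k n, x j ≤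
      MvPolynomial.eval (fun i => ∑ j ∈ Finset.Ico k n, x j * a j i) (vdwF a k) := by
  induction k with
  | zero =>
    intro _ x hx
    simpa [vdwF] using vdw_base n a ha hrow hcol x hx
  | succ k ih =>
    intro hk x hx
    have IH := ih (by omega)
    obtain ⟨m, hm⟩ : ∃ m, n = k + 1 + m := ⟨n - (k+1), by omega⟩
    have hgood := vdwF_good a ha k (m+1) (by omega)
    rcases m with _ | m
    · subst hm
      have h1 := IH (fun _ => 1) (fun _ => one_pos)
      simp only [Nat.Ico_succ_singleton, add_zero] at h1
      simp at h1
      have h2 : MvPolynomial.eval 0 (vdwD (a k) (vdwF a k)) = MvPolynomial.eval (a k) (vdwF a k) := by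
        have e1 := (vdwL_degree (K := ℝ) 0 (a k) hgood.hom).2
        have e2 : (vdwL (K := ℝ) 0 (a k) (vdwF a k)).derivative.eval 0 = 
          (vdwL (K := ℝ) 0 (a k) (vdwF a k)).coeff 1 := by
          rw [← Polynomial.coeff_zero_eq_eval_zero, Polynomial.coeff_derivative]; simp
        rw [vdwL_deriv, vdwL_eval, e1] at e2
        simpa [MvPolynomial.aeval_eq_eval] using e2
      have h3 : vdwg 1 = 1 := by simp [vdwg]
      simp only [vdwF, add_zero, Finset.Ico_self, Finset.prod_empty, Finset.sum_empty, mul_one]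
      rw [Finset.prod_range_succ, show k + 1 - k = 1 by omega, h3, mul_one]
      refine h1.trans (le_of_eq h2.symm)
    · have hpos : ∀ i, 0 < ∑ j ∈ Finset.Ico (k+1) n, x j * a j i := fun i =>
        Finset.sum_pos (fun j _ => mul_pos (hx j) (ha j i)) ⟨k+1, by simp; omega⟩
      have := vdw_step_ineq hgood (ha k) hpos
        ((∏ j ∈ Finset.range k, vdwg (n - j)) * ∏ j ∈ Finset.Ico (k+1) n, x j) (by
          intro t ht
          have h1 := IH (Function.update x k t) (by
            intro j
            by_cases h : j = k
            · subst h; simpa using ht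
            · rw [Function.update_of_ne h]; exact hx j)
          have hu : ∀ j ∈ Finset.Ico (k+1) n, Function.update x k t j = x j := by
            intro j hj
            rw [Function.update_of_ne]
            rw [Finset.mem_Ico] at hj; omega
          rw [Finset.prod_eq_prod_Ico_succ_bot (by omega), Finset.prod_congr rfl hu] at h1
          have h2 : (fun i => ∑ j ∈ Finset.Ico k n, Function.update x k t j * a j i) = 
            fun i => (∑ j ∈ Finset.Ico (k+1) n, x j * a j i) + t * a k i := by
            funext i
            rw [Finset.sum_eq_sum_Ico_succ_bot (by omega), add_comm]
            congr 1
            · exact Finset.sum_congr rfl fun j hj => by rw [hu j hj]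
            · simp
          rw [h2] at h1
          refine le_of_eq_of_le ?_ h1
          simp only [Function.update_self]
          ring)
      rw [Finset.prod_range_succ]
      refine le_of_eq_of_le ?_ this
      have : vdwg (n - k) = (((m+1 : ℕ) : ℝ) / ((m+2 : ℕ) : ℝ)) ^ (m+1) := by
        rw [show n - k = m + 2 by omega]; rfl
      rw [this]; ring

theorem vdw_const (n : ℕ) : ∏ j ∈ Finset.range n, vdwg (n - j) = (n.factorial : ℝ) / (n:ℝ) ^ n := by
  have h : ∏ j ∈ Finset.range n, vdwg (n - j) = ∏ j ∈ Finset.range n, vdwg (j + 1) := by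
    rw [← Finset.prod_range_reflect]
    refine Finset.prod_congr rfl fun j hj => ?_
    rw [Finset.mem_range] at hj
    congr 1; omega
  rw [h]
  clear h
  induction n with
  | zero => simp
  | succ n ih =>
    rw [Finset.prod_range_succ, ih]
    rcases Nat.eq_zero_or_pos n with rfl | hn
    · simp [vdwg]
    · have : (0:ℝ) < n := by exact_mod_cast hn
      simp only [vdwg, Nat.add_sub_cancel, Nat.factorial_succ, pow_succ, div_pow]
      push_cast
      field_simp

theorem vdw_pderiv_prod {ι : Type*} [DecidableEq ι] (S : Finset ι) (j : ι) :
    MvPolynomial.pderiv j (∏ i ∈ S, (MvPolynomial.X i : MvPolynomial ι ℝ)) =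
      if j ∈ S then ∏ i ∈ S.erase j, MvPolynomial.X i else 0 := by
  have h0 : ∀ S : Finset ι, j ∉ S → 
      MvPolynomial.pderiv j (∏ i ∈ S, (MvPolynomial.X i : MvPolynomial ι ℝ)) = 0 := by
    intro S
    induction S using Finset.induction_on with
    | empty => simp
    | insert b S hb ih =>
      intro hj
      rw [Finset.mem_insert, not_or] at hj
      rw [Finset.prod_insert hb, MvPolynomial.pderiv_mul, ih hj.2,
        MvPolynomial.pderiv_X_of_ne (Ne.symm hj.1)]
      simp
  split_ifs with h
  · rw [← Finset.mul_prod_erase S _ h, MvPolynomial.pderiv_mul, h0 _ (Finset.notMem_erase j S)]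
    simp
  · exact h0 S h

theorem vdwD_prod {ι : Type*} [Fintype ι] [DecidableEq ι] (a : ι → ℝ) (S : Finset ι) :
    vdwD a (∏ i ∈ S, (MvPolynomial.X i : MvPolynomial ι ℝ)) =
      ∑ j : {j // j ∈ S}, MvPolynomial.C (a j) * ∏ i ∈ S.erase j, MvPolynomial.X i := by
  unfold vdwD
  rw [Finset.sum_coe_sort S (fun j => MvPolynomial.C (a j) * ∏ i ∈ S.erase j, MvPolynomial.X i)]
  simp_rw [vdw_pderiv_prod, mul_ite, mul_zero]
  rw [Finset.sum_ite_mem, Finset.univ_inter]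

theorem vdwD_sum {ι κ : Type*} [Fintype ι] (a : ι → ℝ) (s : Finset κ) (c : κ → ℝ)
    (f : κ → MvPolynomial ι ℝ) :
    vdwD a (∑ e ∈ s, MvPolynomial.C (c e) * f e) = ∑ e ∈ s, MvPolynomial.C (c e) * vdwD a (f e) := by
  unfold vdwD
  simp_rw [map_sum, MvPolynomial.pderiv_C_mul, Finset.mul_sum]
  rw [Finset.sum_comm]
  refine Finset.sum_congr rfl fun e _ => Finset.sum_congr rfl fun i _ => ?_
  ring

theorem vdwF_formula {ι : Type*} [Fintype ι] [DecidableEq ι] (a : ℕ → ι → ℝ) (k : ℕ) :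
    vdwF a k = ∑ e : Fin k ↪ ι, MvPolynomial.C (∏ j : Fin k, a (Fin.rev j) (e j)) *
      ∏ i ∈ (Finset.univ.map e)ᶜ, MvPolynomial.X i := by
  induction k with
  | zero => simp [vdwF]
  | succ k ih =>
    rw [vdwF, ih, vdwD_sum, ← (Equiv.embeddingFinSucc k ι).symm.sum_comp, Fintype.sum_sigma]
    refine Finset.sum_congr rfl fun e _ => ?_
    rw [vdwD_prod, Finset.mul_sum]
    have hmem : ∀ j, j ∈ (Finset.univ.map e)ᶜ ↔ j ∉ Set.range e := by intro j; simp
    refine Fintype.sum_equiv (Equiv.subtypeEquivRight hmem) _ _ fun j => ?_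
    rw [← mul_assoc, ← MvPolynomial.C_mul]
    congr 1
    · congr 1
      rw [Fin.prod_univ_succ, mul_comm]
      simp [Equiv.subtypeEquivRight]
      left
      rfl
    · refine Finset.prod_congr ?_ fun _ _ => rfl
      ext i
      simp [Fin.forall_fin_succ, Equiv.subtypeEquivRight]
      tauto

theorem vdw_pos {n : ℕ} (A : Fin n → Fin n → ℝ) (hA : ∀ j i, 0 < A j i)
    (hrow : ∀ i, ∑ j, A j i = 1) (hcol : ∀ j, ∑ i, A j i = 1) :
    (n.factorial : ℝ) / (n:ℝ) ^ n ≤ ∑ e : Fin n ↪ Fin n, ∏ j, A j (e j) := by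
  let a : ℕ → Fin n → ℝ := fun j i => if h : j < n then A ⟨j, h⟩ i else 1
  have haj : ∀ j : Fin n, a j = A j := fun j => by funext i; simp [a]
  have h := vdw_cap n (by simp) a (by
    intro j i; simp only [a]; split_ifs; exacts [hA _ _, one_pos]) (by
    intro i
    rw [Finset.sum_range, ← hrow i]
    exact Finset.sum_congr rfl fun j _ => by rw [haj]) (by
    intro j hj
    rw [← hcol ⟨j, hj⟩]
    exact Finset.sum_congr rfl fun i _ => by simp [a, hj]) n le_rfl (fun _ => 1) (fun _ => one_pos)
  rw [vdw_const, vdwF_formula] at h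
  simp only [Finset.Ico_self, Finset.prod_empty, mul_one, map_sum, map_mul, MvPolynomial.eval_C] at h
  refine h.trans (le_of_eq ?_)
  have hperm : ∀ e : Fin n ↪ Fin n, (Finset.univ.map e)ᶜ = ∅ := by
    intro e
    have := Finite.surjective_of_injective e.injective
    ext i
    simp [this i]
  simp only [hperm, Finset.prod_empty, map_one, mul_one]
  refine Fintype.sum_equiv (Equiv.embeddingCongr Fin.revPerm (Equiv.refl _)) _ _ fun e => ?_
  refine Fintype.prod_equiv Fin.revPerm _ _ fun j => ?_
  simp [← haj]

theorem vdw_main {n : ℕ} (A : Fin n → Fin n → ℝ) (hA : ∀ j i, 0 ≤ A j i)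
    (hrow : ∀ i, ∑ j, A j i = 1) (hcol : ∀ j, ∑ i, A j i = 1) :
    (n.factorial : ℝ) / (n:ℝ) ^ n ≤ ∑ e : Fin n ↪ Fin n, ∏ j, A j (e j) := by
  rcases Nat.eq_zero_or_pos n with rfl | hn
  · simp
  have hn' : (0:ℝ) < n := by exact_mod_cast hn
  let f : ℝ → ℝ := fun ε => ∑ e : Fin n ↪ Fin n, ∏ j, ((1 - ε) * A j (e j) + ε / n)
  have hf : Continuous f := by fun_prop
  have ht : Filter.Tendsto f (nhdsWithin 0 (Set.Ioi 0)) (nhds (f 0)) :=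
    hf.continuousAt.tendsto.mono_left nhdsWithin_le_nhds
  have h0 : f 0 = ∑ e : Fin n ↪ Fin n, ∏ j, A j (e j) := by simp [f]
  rw [← h0]
  refine ge_of_tendsto ht ?_
  filter_upwards [Ioo_mem_nhdsGT (show (0:ℝ) < 1 by norm_num)] with ε hε
  refine vdw_pos (fun j i => (1 - ε) * A j i + ε / n) ?_ ?_ ?_
  · intro j i
    have := mul_nonneg (sub_nonneg.2 hε.2.le) (hA j i)
    have := div_pos hε.1 hn'
    linarith
  · intro i
    rw [Finset.sum_add_distrib, ← Finset.mul_sum, hrow]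
    simp
    field_simp
    ring
  · intro i
    rw [Finset.sum_add_distrib, ← Finset.mul_sum, hcol]
    simp
    field_simp
    ring

/-- Latin rectangles with `r` rows and `d` columns. -/
abbrev VdwRect (d r : ℕ) : Type :=
  {T : Fin r → (Fin d ↪ Fin d) // ∀ j, Function.Injective (fun i => T i j)}

noncomputable instance vdwRectFintype (d r : ℕ) : Fintype (VdwRect d r) := by
  classical
  infer_instance

theorem vdw_count {d r : ℕ} (g : Fin r → Fin d) (hg : Function.Injective g) (hr : r ≤ d)
    (P : Fin d → Prop) [DecidablePred P] (hP : ∀ x, P x ↔ ∀ i, g i ≠ x) :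
    ∑ x, (if P x then (1:ℝ) else 0) = (d:ℝ) - r := by
  rw [Finset.sum_boole]
  have : Finset.univ.filter P = (Finset.univ.image g)ᶜ := by
    ext x; simp [hP]
  rw [this, Finset.card_compl, Finset.card_image_of_injective _ hg]
  simp [Nat.cast_sub hr]

open Classical in
theorem vdw_ext {d r : ℕ} (hr : r < d) (T : VdwRect d r) :
    ((d:ℝ) - r) ^ d * ((d.factorial : ℝ) / (d:ℝ) ^ d) ≤
      (Fintype.card {e : Fin d ↪ Fin d // ∀ j i, T.1 i j ≠ e j} : ℝ) := by
  have hpos : (0:ℝ) < (d:ℝ) - r := by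
    have : (r:ℝ) < d := by exact_mod_cast hr
    linarith
  have h := vdw_main (fun j s : Fin d => (if ∀ i, T.1 i j ≠ s then (1:ℝ) else 0) / ((d:ℝ) - r))
    (by intro j s; apply div_nonneg _ hpos.le; split_ifs <;> norm_num)
    (by
      intro s
      have hs : ∀ i, ∃ j, T.1 i j = s := fun i => Finite.surjective_of_injective (T.1 i).injective s
      choose g hg using hs
      rw [← Finset.sum_div, vdw_count g ?_ hr.le, div_self hpos.ne']
      · intro x
        refine forall_congr' fun i => not_congr ?_
        exact ⟨fun h => (T.1 i).injective ((hg i).trans h.symm), fun h => h ▸ hg i⟩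
      · intro i i' hii
        apply T.2 (g i)
        have h1 := hg i
        have h2 := hg i'
        rw [← hii] at h2
        simp only [h1, h2])
    (by
      intro j
      rw [← Finset.sum_div, vdw_count (fun i => T.1 i j) (T.2 j) hr.le _ (fun x => Iff.rfl),
        div_self hpos.ne'])
  have h2 : ∑ e : Fin d ↪ Fin d, ∏ j, ((if ∀ i, T.1 i j ≠ e j then (1:ℝ) else 0) / ((d:ℝ) - r)) =
      (Fintype.card {e : Fin d ↪ Fin d // ∀ j i, T.1 i j ≠ e j} : ℝ) / ((d:ℝ) - r) ^ d := by
    simp_rw [Finset.prod_div_distrib, Finset.prod_boole]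
    simp only [Finset.mem_univ, true_imp_iff]
    rw [← Finset.sum_div, Finset.sum_boole, Fintype.card_subtype]
    simp
  rw [h2, le_div_iff₀ (by positivity)] at h
  linarith

open Classical in
theorem vdw_rect_succ {d r : ℕ} (hr : r < d) :
    (Fintype.card (VdwRect d r) : ℝ) * (((d:ℝ) - r) ^ d * ((d.factorial : ℝ) / (d:ℝ) ^ d)) ≤
      Fintype.card (VdwRect d (r+1)) := by
  have hinj : Fintype.card (Σ T : VdwRect d r, {e : Fin d ↪ Fin d // ∀ j i, T.1 i j ≠ e j}) ≤
      Fintype.card (VdwRect d (r+1)) := by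
    refine Fintype.card_le_of_injective
      (fun p => (⟨Fin.cons p.2.1 p.1.1, ?_⟩ : VdwRect d (r+1))) ?_
    · intro j i i' h
      induction i using Fin.cases with
      | zero =>
        induction i' using Fin.cases with
        | zero => rfl
        | succ i' => exact absurd h.symm (by simpa using p.2.2 j i')
      | succ i =>
        induction i' using Fin.cases with
        | zero => exact absurd h (by simpa using p.2.2 j i)
        | succ i' =>
          congr 1
          exact p.1.2 j (by simpa using h)
    · rintro ⟨⟨T, hT⟩, ⟨e, he⟩⟩ ⟨⟨T', hT'⟩, ⟨e', he'⟩⟩ h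
      have h1 : (Fin.cons e T : Fin (r+1) → (Fin d ↪ Fin d)) = Fin.cons e' T' :=
        congrArg Subtype.val h
      obtain ⟨h2, h3⟩ := Fin.cons_injective2 h1
      subst h2 h3
      rfl
  rw [Fintype.card_sigma] at hinj
  have hinj' : (∑ T : VdwRect d r,
      (Fintype.card {e : Fin d ↪ Fin d // ∀ j i, T.1 i j ≠ e j} : ℝ)) ≤
      Fintype.card (VdwRect d (r+1)) := by exact_mod_cast hinj
  refine le_trans ?_ hinj'
  rw [← nsmul_eq_mul, ← Finset.card_univ, ← Finset.sum_const]
  exact Finset.sum_le_sum fun T _ => vdw_ext hr T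

theorem vdw_rect {d r : ℕ} (hr : r ≤ d) :
    ∏ k ∈ Finset.range r, (((d:ℝ) - k) ^ d * ((d.factorial : ℝ) / (d:ℝ) ^ d)) ≤
      Fintype.card (VdwRect d r) := by
  induction r with
  | zero =>
    have : Nonempty (VdwRect d 0) := ⟨⟨Fin.elim0, fun j i => i.elim0⟩⟩
    have := Fintype.card_pos (α := VdwRect d 0)
    simp only [Finset.range_zero, Finset.prod_empty]
    exact_mod_cast this
  | succ r ih =>
    rw [Finset.prod_range_succ]
    refine le_trans (mul_le_mul_of_nonneg_right (ih (by omega)) ?_) (vdw_rect_succ (by omega))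
    have : (r:ℝ) ≤ d := by exact_mod_cast (by omega : r ≤ d)
    have : (0:ℝ) ≤ (d:ℝ) - r := by linarith
    positivity

/-- The number of latin squares of order `d` is at least `d!^(2d) / d^(d^2)`. -/
theorem stmt3 (d : ℕ) (hd : 0 < d) :
    ((d.factorial : ℝ) ^ (2 * d)) / (d : ℝ) ^ (d ^ 2) ≤ (numLatinSquares d : ℝ) := by
  have h1 : Fintype.card (VdwRect d d) ≤ numLatinSquares d := by
    unfold numLatinSquares
    rw [← Nat.card_eq_fintype_card, ← Nat.card_coe_set_eq]
    refine Nat.card_le_card_of_injective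
      (fun T => ⟨fun i j => T.1 i j, fun i => (T.1 i).injective, T.2⟩) ?_
    intro T T' h
    apply Subtype.ext
    funext i
    ext j
    have := congrFun (congrFun (congrArg Subtype.val h) i) j
    exact congrArg _ this
  have h2 := vdw_rect (le_refl d)
  refine le_trans (le_of_eq ?_) (h2.trans (by exact_mod_cast h1))
  have h3 : ∏ k ∈ Finset.range d, ((d:ℝ) - k) = d.factorial := by
    rw [← Finset.prod_range_add_one_eq_factorial, ← Finset.prod_range_reflect]
    push_cast
    refine Finset.prod_congr rfl fun k hk => ?_
    rw [Finset.mem_range] at hk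
    have h4 : ((d - 1 - k : ℕ) : ℝ) + (k + 1) = (d : ℝ) := by
      exact_mod_cast (by omega : d - 1 - k + (k + 1) = d)
    linarith
  rw [Finset.prod_mul_distrib, Finset.prod_pow, h3, Finset.prod_const, Finset.card_range, div_pow,
    ← pow_mul, two_mul, pow_add, sq]
  ring
end

section
/- Let G be a simple d-uniform hypergraph on n vertices with d ≥ 4 and d dividing n. Then the number of 1-factors of G satisfies φ(G) ≤ (per M(G) / μ(n,d))^{1/d}, where μ(n,d) = (d!^2 / (d^d · d!^{1/d}))^n. -/
open scoped Classical in
/-- The permanent of a `d`-dimensional matrix of order `n`. -/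
noncomputable def mper {n d : ℕ} (A : (Fin d → Fin n) → ℕ) : ℕ :=
  ∑ σ ∈ Finset.univ.filter (fun σ : Fin d → Equiv.Perm (Fin n) =>
      ∀ h : 0 < d, σ ⟨0, h⟩ = Equiv.refl (Fin n)),
    ∏ i : Fin n, A (fun k => σ k i)

/-- `P` is a 1-factor of the hypergraph with hyperedge set `W`. -/
def IsOneFactor {n : ℕ} (W : Finset (Finset (Fin n))) (P : Finset (Finset (Fin n))) : Prop :=
  P ⊆ W ∧ ∀ v : Fin n, ∃! e, e ∈ P ∧ v ∈ e

/-- The number of 1-factors of the hypergraph with hyperedge set `W`. -/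
noncomputable def numOneFactors {n : ℕ} (W : Finset (Finset (Fin n))) : ℕ :=
  {P : Finset (Finset (Fin n)) | IsOneFactor W P}.ncard

open scoped Classical in
/-- The `d`-dimensional adjacency matrix of the `d`-uniform hypergraph with
hyperedge set `W` on `n` vertices. -/
noncomputable def adjMatrix (n d : ℕ) (W : Finset (Finset (Fin n))) :
    (Fin d → Fin n) → ℕ :=
  fun α => if Function.Injective α ∧ Finset.image α Finset.univ ∈ W then 1 else 0


open Polynomial in
lemma gv_univ_norm (h : ℂ[X]) (hr : ∀ u, h.eval u = 0 → u.re ≤ 0) :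
    ‖h.eval 0‖ ≤ ‖h.eval 1‖ := by
  by_cases h0 : h = 0
  · simp [h0]
  have hs := IsAlgClosed.splits h
  have hr' : ∀ u ∈ h.roots, u.re ≤ 0 := fun u hu => hr u ((mem_roots h0).1 hu)
  rw [hs.eval_eq_prod_roots, hs.eval_eq_prod_roots, norm_mul, norm_mul]
  refine mul_le_mul_of_nonneg_left ?_ (norm_nonneg _)
  generalize h.roots = s at hr'
  induction s using Multiset.induction_on with
  | empty => simp
  | cons a s ih =>
    simp only [Multiset.map_cons, Multiset.prod_cons, norm_mul]
    have ha := hr' a (by simp)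
    refine mul_le_mul ?_ (ih fun u hu => hr' u (by simp [hu])) (norm_nonneg _) (norm_nonneg _)
    rw [← sq_le_sq₀ (norm_nonneg _) (norm_nonneg _), Complex.sq_norm, Complex.sq_norm,
      Complex.normSq_apply, Complex.normSq_apply]
    simp
    nlinarith

open Polynomial in
lemma gv_gl (h : ℂ[X]) (hr : ∀ u, h.eval u = 0 → u.re ≤ 0) (hd : h.natDegree ≠ 0)
    (w : ℂ) (hw : 0 < w.re) : h.derivative.eval w ≠ 0 := by
  have h0 : h ≠ 0 := by rintro rfl; simp at hd
  have hs := IsAlgClosed.splits h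
  have hr' : ∀ u ∈ h.roots, u.re ≤ 0 := fun u hu => hr u ((mem_roots h0).1 hu)
  have hx : h.eval w ≠ 0 := fun h => absurd (hr w h) (by linarith)
  have hc : h.roots ≠ 0 := by
    intro h1
    have := hs.natDegree_eq_card_roots
    rw [h1] at this
    simp at this; exact hd this
  intro hz
  have hsum := hs.eval_derivative_div_eval_of_ne_zero hx
  rw [hz, zero_div] at hsum
  have key : ∀ s : Multiset ℂ, (∀ u ∈ s, u.re ≤ 0) →
      0 ≤ ((s.map fun z ↦ 1 / (w - z)).sum).re ∧
      (s ≠ 0 → 0 < ((s.map fun z ↦ 1 / (w - z)).sum).re) := by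
    intro s
    induction s using Multiset.induction_on with
    | empty => simp
    | cons a s ih =>
      intro hs
      have h1 := (ih fun u hu => hs u (by simp [hu])).1
      have ha := hs a (by simp)
      have h2 : 0 < (1 / (w - a)).re := by
        have hp : 0 < (w - a).re := by simp; linarith
        rw [one_div, Complex.inv_re]
        refine div_pos hp (Complex.normSq_pos.2 ?_)
        intro h; rw [h] at hp; simp at hp
      simp only [Multiset.map_cons, Multiset.sum_cons, Complex.add_re]
      constructor
      · linarith
      · intro _; linarith
  have := (key _ hr').2 hc
  rw [← hsum] at this
  simp at this

open Polynomial in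
/-- the univariate capacity step -/
lemma gv_cap (R : ℂ[X]) (k : ℕ) (hk : 1 ≤ k) (hdeg : R.natDegree ≤ k)
    (hr : ∀ u, R.eval u = 0 → u.im = 0 ∧ u.re ≤ 0) (c : ℝ) (hc : 0 < c)
    (hR : ∀ t : ℝ, 0 < t → c * t ≤ ‖R.eval (t : ℂ)‖) :
    c * (((k : ℝ) - 1) / k) ^ (k - 1) ≤ ‖R.derivative.eval 0‖ := by
  have hk0 : (1 : ℝ) ≤ k := by exact_mod_cast hk
  have hg1 : (((k : ℝ) - 1) / k) ^ (k - 1) ≤ 1 := by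
    apply pow_le_one₀
    · apply div_nonneg <;> linarith
    · rw [div_le_one (by linarith)]; linarith
  by_cases h00 : R.eval 0 = 0
  · refine le_trans (b := c) (by nlinarith) ?_
    obtain ⟨S, hS⟩ : (X : ℂ[X]) ∣ R := by
      rw [X_dvd_iff, coeff_zero_eq_eval_zero]; exact h00
    have h1 : R.derivative.eval 0 = S.eval 0 := by
      rw [hS]; simp
    rw [h1]
    have ht : ∀ t : ℝ, 0 < t → c ≤ ‖S.eval (t : ℂ)‖ := by
      intro t ht
      have := hR t ht
      rw [hS] at this
      simp only [eval_mul, eval_X, norm_mul, Complex.norm_real, Real.norm_eq_abs, abs_of_pos ht] at this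
      nlinarith
    have hcont : Continuous fun t : ℝ => ‖S.eval (t : ℂ)‖ := by fun_prop
    have hlim : Filter.Tendsto (fun t : ℝ => ‖S.eval (t : ℂ)‖) (nhdsWithin 0 (Set.Ioi 0))
        (nhds ‖S.eval 0‖) := by
      have := (hcont.tendsto 0).mono_left (nhdsWithin_le_nhds (s := Set.Ioi 0))
      simpa using this
    refine ge_of_tendsto hlim ?_
    filter_upwards [self_mem_nhdsWithin] with t h using ht t h
  · have h0 : R ≠ 0 := by rintro rfl; simp at h00
    have hs := IsAlgClosed.splits R
    have hr' : ∀ u ∈ R.roots, u.im = 0 ∧ u.re < 0 := by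
      intro u hu
      have h1 := hr u ((mem_roots h0).1 hu)
      refine ⟨h1.1, lt_of_le_of_ne h1.2 ?_⟩
      intro h2
      have : u = 0 := Complex.ext h2 h1.1
      subst this
      exact h00 ((mem_roots h0).1 hu)
    set A := ‖R.eval 0‖ with hA
    have hApos : 0 < A := norm_pos_iff.2 h00
    set T : Multiset ℝ := R.roots.map (fun u => (-u.re)⁻¹) with hT
    have hTpos : ∀ b ∈ T, 0 < b := by
      intro b hb
      rw [hT, Multiset.mem_map] at hb
      obtain ⟨u, hu, rfl⟩ := hb
      have := (hr' u hu).2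
      apply inv_pos.2; linarith
    have hval : ∀ t : ℝ, 0 < t → ‖R.eval (t : ℂ)‖ = A * (T.map fun b => 1 + t * b).prod := by
      intro t ht
      rw [hA, hs.eval_eq_prod_roots, hs.eval_eq_prod_roots, norm_mul, norm_mul, mul_assoc, hT]
      congr 1
      clear hT hTpos T
      generalize R.roots = s at hr'
      induction s using Multiset.induction_on with
      | empty => simp
      | cons a s ih =>
        simp only [Multiset.map_cons, Multiset.prod_cons, norm_mul]
        rw [ih fun u hu => hr' u (by simp [hu])]
        have ha := hr' a (by simp)
        obtain ⟨b, rfl⟩ : ∃ b : ℝ, a = b := ⟨a.re, Complex.ext rfl (by simpa using ha.1)⟩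
        have hb : b < 0 := by simpa using ha.2
        rw [← Complex.ofReal_sub, zero_sub, norm_neg, Complex.norm_real, Complex.norm_real,
          Real.norm_eq_abs, Real.norm_eq_abs, abs_of_neg hb, abs_of_pos (by linarith)]
        simp only [Complex.ofReal_re]
        have hb0 : -b ≠ 0 := by linarith
        have h3 : t - b = -b * (1 + t * (-b)⁻¹) := by
          rw [mul_add, mul_one, mul_left_comm, mul_inv_cancel₀ hb0]; ring
        rw [h3]; ring
    have hder : ‖R.derivative.eval 0‖ = A * T.sum := by
      rw [hs.eval_derivative_eq_eval_mul_sum h00, norm_mul, ← hA]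
      congr 1
      have h5 : ((R.roots.map fun z => 1 / ((0:ℂ) - z)).sum) = ((T.sum : ℝ) : ℂ) := by
        rw [hT]
        clear hval hT hTpos T
        generalize R.roots = s at hr'
        induction s using Multiset.induction_on with
        | empty => simp
        | cons a s ih =>
          simp only [Multiset.map_cons, Multiset.sum_cons]
          rw [ih fun u hu => hr' u (by simp [hu])]
          have ha := hr' a (by simp)
          obtain ⟨b, rfl⟩ : ∃ b : ℝ, a = b := ⟨a.re, Complex.ext rfl (by simpa using ha.1)⟩
          push_cast
          simp
      rw [h5, Complex.norm_real, Real.norm_eq_abs, abs_of_nonneg]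
      exact Multiset.sum_nonneg fun b hb => (hTpos b hb).le
    have hcard : T.card ≤ k := by
      rw [hT, Multiset.card_map]
      exact (R.card_roots').trans hdeg
    rw [hder]
    -- exponential form of AM-GM
    have hamgm : ∀ (y t : ℝ), 0 < y → 0 < t → (T.map fun b => 1 + t * b).prod ≤
        (1 + y) ^ T.card * Real.exp ((t * T.sum - T.card * y) / (1 + y)) := by
      intro y t hy ht
      clear hder hval hcard
      clear_value T
      clear hT
      induction T using Multiset.induction_on with
      | empty => simp
      | cons a s ih =>
        have ih := ih fun b hb => hTpos b (by simp [hb])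
        have ha := hTpos a (by simp)
        simp only [Multiset.map_cons, Multiset.prod_cons, Multiset.sum_cons, Multiset.card_cons]
        have h1 : 1 + t * a ≤ (1 + y) * Real.exp ((t * a - y) / (1 + y)) := by
          have := Real.add_one_le_exp ((t * a - y) / (1 + y))
          have h2 : 1 + t * a = (1 + y) * ((t * a - y) / (1 + y) + 1) := by field_simp; ring
          rw [h2]; gcongr
        have h3 : (t * (a + s.sum) - ((s.card + 1 : ℕ) : ℝ) * y) / (1 + y) =
          (t * a - y) / (1 + y) + (t * s.sum - s.card * y) / (1 + y) := by
          push_cast; field_simp; ring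
        rw [h3, Real.exp_add, pow_succ]
        calc _ ≤ ((1 + y) * Real.exp ((t * a - y) / (1 + y))) * ((1 + y) ^ s.card *
              Real.exp ((t * s.sum - s.card * y) / (1 + y))) := by
              refine mul_le_mul h1 ih ?_ (by positivity)
              apply Multiset.prod_nonneg
              intro b hb
              rw [Multiset.mem_map] at hb
              obtain ⟨b, hb, rfl⟩ := hb
              have := hTpos b (by simp [hb])
              positivity
          _ = _ := by ring
    have hamgm2 : ∀ (y t : ℝ), 0 < y → 0 < t → t * T.sum = k * y →
        (T.map fun b => 1 + t * b).prod ≤ (1 + y) ^ k := by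
      intro y t hy ht he
      refine (hamgm y t hy ht).trans ?_
      obtain ⟨r, hr⟩ := Nat.exists_eq_add_of_le hcard
      rw [he]
      conv_rhs => rw [hr, pow_add]
      gcongr
      have : ((k : ℝ) * y - T.card * y) / (1 + y) = r * (y / (1 + y)) := by
        rw [hr]; push_cast; ring
      rw [this, Real.exp_nat_mul]
      gcongr
      rw [← Real.le_log_iff_exp_le (by positivity)]
      have := Real.one_sub_inv_le_log_of_pos (x := 1 + y) (by positivity)
      have h4 : y / (1 + y) = 1 - (1 + y)⁻¹ := by field_simp; ring
      linarith
    have hspos : 0 < T.sum := by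
      rcases (Multiset.sum_nonneg fun b hb => (hTpos b hb).le : 0 ≤ T.sum).lt_or_eq with h | h
      · exact h
      exfalso
      have hT0 : T = 0 := by
        by_contra hne
        obtain ⟨b, hb⟩ := Multiset.exists_mem_of_ne_zero hne
        obtain ⟨T', hT'⟩ := Multiset.exists_cons_of_mem hb
        have hb' := hTpos b hb
        rw [hT', Multiset.sum_cons] at h
        have : 0 ≤ T'.sum := Multiset.sum_nonneg fun b hb => (hTpos b (by rw [hT']; simp [hb])).le
        linarith
      have h1 := hR (A / c + 1) (by positivity)
      rw [hval _ (by positivity), hT0] at h1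
      simp at h1
      have : c * (A / c + 1) = A + c := by field_simp
      linarith
    rcases hk.eq_or_lt with h1 | h1
    · subst h1
      simp
      by_contra hlt
      push Not at hlt
      -- take t large
      have ht : 0 < A / (c - A * T.sum) + 1 := by
        have : 0 < c - A * T.sum := by linarith
        positivity
      set t := A / (c - A * T.sum) + 1 with htdef
      have h2 := hamgm2 (t * T.sum) t (by positivity) ht (by simp)
      have h3 := hR t ht
      rw [hval t ht] at h3
      have h4 : (c - A * T.sum) * t = A + (c - A * T.sum) := by
        have : c - A * T.sum ≠ 0 := by linarith
        rw [htdef]; field_simp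
      simp at h2
      nlinarith
    · have hk1 : (0:ℝ) < (k:ℝ) - 1 := by
        have : (1:ℝ) < k := by exact_mod_cast h1
        linarith
      set y : ℝ := 1 / (k - 1) with hy
      have hypos : 0 < y := by positivity
      set t : ℝ := k * y / T.sum with ht
      have htpos : 0 < t := by positivity
      have h2 := hamgm2 y t hypos htpos (by rw [ht]; field_simp)
      have h3 := hR t htpos
      rw [hval t htpos] at h3
      have h4 : c * t ≤ A * (1 + y) ^ k := h3.trans (by gcongr)
      have h5 : 1 + y = k / (k - 1) := by rw [hy]; field_simp; ring
      have h6 : k * y = 1 + y := by rw [h5, hy]; field_simp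
      rw [ht, h6] at h4
      have h7 : (((k : ℝ) - 1) / k) = (1 + y)⁻¹ := by rw [h5, inv_div]
      rw [h7]
      obtain ⟨m, rfl⟩ : ∃ m, k = m + 1 := ⟨k - 1, by omega⟩
      simp only [Nat.add_sub_cancel]
      rw [pow_succ] at h4
      have h8 : 0 < 1 + y := by positivity
      rw [inv_pow, ← div_eq_mul_inv, div_le_iff₀ (by positivity)]
      rw [← mul_div_assoc, div_le_iff₀ hspos] at h4
      refine le_of_mul_le_mul_right (a := 1 + y) ?_ h8
      linarith

section gurvits
set_option linter.unusedSectionVars false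
set_option linter.unusedSimpArgs false
open MvPolynomial

variable {ι : Type} [Fintype ι] [DecidableEq ι]

/-- Nonvanishing on the open right half plane. -/
def HStab (p : MvPolynomial ι ℂ) : Prop := ∀ z : ι → ℂ, (∀ i, 0 < (z i).re) → eval z p ≠ 0

/-- line restriction -/
noncomputable def gvSub (p : MvPolynomial ι ℂ) (g : ι → Polynomial ℂ) : Polynomial ℂ := aeval g p

lemma gvSub_eval (p : MvPolynomial ι ℂ) (g : ι → Polynomial ℂ) (u : ℂ) :
    (gvSub p g).eval u = eval (fun i => (g i).eval u) p := by
  unfold gvSub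
  induction p using MvPolynomial.induction_on with
  | C a => simp
  | add p q hp hq => simp [hp, hq]
  | mul_X p i hp => simp [hp]

lemma gv_hom {p : MvPolynomial ι ℂ} {m : ℕ} (hp : p.IsHomogeneous m) (l : ℂ) (z : ι → ℂ) :
    eval (fun i => l * z i) p = l ^ m * eval z p := by
  rw [eval_eq', eval_eq', Finset.mul_sum]
  refine Finset.sum_congr rfl fun d hd => ?_
  have h1 : d.degree = m := by
    have := hp (mem_support_iff.1 hd)
    rw [Finsupp.degree_eq_weight_one]; exact this
  have h2 : ∏ i, (l * z i) ^ d i = l ^ m * ∏ i, z i ^ d i := by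
    simp_rw [mul_pow]
    rw [Finset.prod_mul_distrib, Finset.prod_pow_eq_pow_sum, ← h1, Finsupp.degree_eq_sum]
  rw [h2]; ring

lemma gv_lemma1 {p : MvPolynomial ι ℂ} {m : ℕ} (hp : p.IsHomogeneous m) (hs : HStab p)
    (z : ι → ℂ) (hz : ∀ i, 0 < (z i).re) :
    ‖eval (fun i => ((z i).re : ℂ)) p‖ ≤ ‖eval z p‖ := by
  have := gv_univ_norm (gvSub p fun i => Polynomial.C ((z i).re : ℂ) +
    Polynomial.C (Complex.I * (z i).im) * Polynomial.X) ?_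
  · rw [gvSub_eval, gvSub_eval] at this
    simp only [Polynomial.eval_add, Polynomial.eval_mul, Polynomial.eval_C, Polynomial.eval_X,
      mul_zero, add_zero, mul_one] at this
    convert this using 4
    funext i
    rw [mul_comm, Complex.re_add_im]
  · intro u hu
    by_contra hlt
    push Not at hlt
    rw [gvSub_eval] at hu
    simp only [Polynomial.eval_add, Polynomial.eval_mul, Polynomial.eval_C, Polynomial.eval_X] at hu
    have hu0 : u ≠ 0 := by rintro rfl; simp at hlt
    refine hs (fun i => u⁻¹ * (((z i).re : ℂ) + Complex.I * (z i).im * u)) ?_ ?_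
    · intro i
      have : u⁻¹ * (((z i).re : ℂ) + Complex.I * (z i).im * u) =
        ((z i).re : ℂ) * u⁻¹ + Complex.I * (z i).im := by field_simp
      rw [this]
      simp only [Complex.add_re, Complex.re_ofReal_mul, Complex.mul_re, Complex.I_re, Complex.I_im,
        Complex.ofReal_re, Complex.ofReal_im, Complex.inv_re]
      have h1 : 0 < Complex.normSq u := Complex.normSq_pos.2 hu0
      have := hz i
      simp
      positivity
    · rw [gv_hom hp, hu, mul_zero]

lemma gv_lemma1' {p : MvPolynomial ι ℂ} {m : ℕ} (hp : p.IsHomogeneous m) (hs : HStab p)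
    (z : ι → ℂ) (hz : ∀ i, 0 ≤ (z i).re) :
    ‖eval (fun i => ((z i).re : ℂ)) p‖ ≤ ‖eval z p‖ := by
  have h1 : ∀ e : ℝ, 0 < e → ‖eval (fun i => ((z i).re : ℂ) + e) p‖ ≤
      ‖eval (fun i => z i + e) p‖ := by
    intro e he
    have := gv_lemma1 hp hs (fun i => z i + e) (fun i => by have := hz i; simp; linarith)
    simpa using this
  have hc1 : Continuous fun e : ℝ => ‖eval (fun i => ((z i).re : ℂ) + e) p‖ :=
    ((MvPolynomial.continuous_eval p).comp (by fun_prop)).norm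
  have hc2 : Continuous fun e : ℝ => ‖eval (fun i => z i + e) p‖ :=
    ((MvPolynomial.continuous_eval p).comp (by fun_prop)).norm
  have l1 := (hc1.tendsto 0).mono_left (nhdsWithin_le_nhds (s := Set.Ioi 0))
  have l2 := (hc2.tendsto 0).mono_left (nhdsWithin_le_nhds (s := Set.Ioi 0))
  have := le_of_tendsto_of_tendsto l1 l2 (by
    filter_upwards [self_mem_nhdsWithin] with t h using h1 t h)
  simpa using this

/-- slice in variable j -/
noncomputable def gvSlice (p : MvPolynomial ι ℂ) (z : ι → ℂ) (j : ι) : Polynomial ℂ :=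
  gvSub p (fun i => if i = j then Polynomial.X else Polynomial.C (z i))

lemma gvSlice_eval (p : MvPolynomial ι ℂ) (z : ι → ℂ) (j : ι) (w : ℂ) :
    (gvSlice p z j).eval w = eval (Function.update z j w) p := by
  rw [gvSlice, gvSub_eval]
  congr 2
  funext i
  by_cases h : i = j
  · subst h; simp
  · simp [h]

lemma gvSlice_deriv (p : MvPolynomial ι ℂ) (z : ι → ℂ) (j : ι) :
    (gvSlice p z j).derivative = gvSlice (pderiv j p) z j := by
  unfold gvSlice gvSub
  induction p using MvPolynomial.induction_on with
  | C a => simp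
  | add p q hp hq => simp [hp, hq]
  | mul_X p i hp =>
    by_cases h : i = j
    · subst h; simp [pderiv_mul, hp]; ring
    · simp [hp, h, pderiv_X_of_ne h]; ring

lemma gvSlice_natDegree (p : MvPolynomial ι ℂ) (z : ι → ℂ) (j : ι) :
    (gvSlice p z j).natDegree ≤ degreeOf j p := by
  unfold gvSlice gvSub
  rw [aeval_def, eval₂_eq']
  apply Polynomial.natDegree_sum_le_of_forall_le
  intro d hd
  have h1 : d j ≤ degreeOf j p := degreeOf_le_iff.1 le_rfl d hd
  refine le_trans ?_ h1
  rw [Polynomial.algebraMap_eq]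
  refine (Polynomial.natDegree_C_mul_le _ _).trans ?_
  refine (Polynomial.natDegree_prod_le _ _).trans ?_
  rw [Finset.sum_eq_single j]
  · simp
  · intro i _ hi
    rw [if_neg hi, ← Polynomial.C_pow, Polynomial.natDegree_C]
  · simp

/-- set variable j to zero -/
noncomputable def gvRes (j : ι) (p : MvPolynomial ι ℂ) : MvPolynomial ι ℂ :=
  aeval (fun i => if i = j then 0 else X i) p

lemma gvRes_coeff (j : ι) (p : MvPolynomial ι ℂ) (m : ι →₀ ℕ) :
    coeff m (gvRes j p) = if m j = 0 then coeff m p else 0 := by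
  unfold gvRes
  induction p using MvPolynomial.induction_on' with
  | monomial d a =>
    rw [aeval_monomial, Finsupp.prod_fintype _ _ (by simp)]
    by_cases h : d j = 0
    · have : ∏ i, (if i = j then (0 : MvPolynomial ι ℂ) else X i) ^ d i = monomial d 1 := by
        rw [monomial_eq, Finsupp.prod_fintype _ _ (by simp)]
        simp only [map_one, one_mul]
        refine Finset.prod_congr rfl fun i _ => ?_
        by_cases hi : i = j
        · subst hi; simp [h]
        · simp [hi]
      rw [this, algebraMap_eq, C_mul_monomial, mul_one, coeff_monomial]
      by_cases hd : d = m
      · subst hd; simp [h]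
      · simp [hd]
    · have : ∏ i, (if i = j then (0 : MvPolynomial ι ℂ) else X i) ^ d i = 0 :=
        Finset.prod_eq_zero (Finset.mem_univ j) (by simp [h])
      rw [this, mul_zero, coeff_zero, coeff_monomial]
      by_cases hd : d = m
      · subst hd; simp [h]
      · simp [hd]
  | add p q hp hq =>
    rw [map_add, coeff_add, hp, hq, coeff_add]
    split_ifs <;> simp

lemma gvRes_eval (j : ι) (p : MvPolynomial ι ℂ) (z : ι → ℂ) :
    eval z (gvRes j p) = eval (Function.update z j 0) p := by
  unfold gvRes
  rw [aeval_eq_bind₁]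
  induction p using MvPolynomial.induction_on with
  | C a => simp
  | add p q hp hq => simp [hp, hq]
  | mul_X p i hp =>
    by_cases h : i = j
    · subst h; simp
    · simp [hp, h]

/-- The Gurvits operator. -/
noncomputable def gvD (j : ι) (p : MvPolynomial ι ℂ) : MvPolynomial ι ℂ := gvRes j (pderiv j p)

lemma gvD_coeff (j : ι) (p : MvPolynomial ι ℂ) (m : ι →₀ ℕ) :
    coeff m (gvD j p) = if m j = 0 then coeff (m + Finsupp.single j 1) p else 0 := by
  rw [gvD, gvRes_coeff, coeff_pderiv]
  split_ifs with h
  · simp [h]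
  · rfl

lemma gv_pderiv_hom {p : MvPolynomial ι ℂ} {m : ℕ} (hp : p.IsHomogeneous m) (j : ι) :
    (pderiv j p).IsHomogeneous (m - 1) := by
  intro d hd
  rw [coeff_pderiv] at hd
  have := hp (left_ne_zero_of_mul hd)
  rw [map_add] at this
  simp [Finsupp.weight_single] at this
  omega

lemma gvD_hom {p : MvPolynomial ι ℂ} {m : ℕ} (hp : p.IsHomogeneous m) (j : ι) :
    (gvD j p).IsHomogeneous (m - 1) := by
  intro d hd
  apply gv_pderiv_hom hp j
  rw [gvD, gvRes_coeff] at hd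
  split_ifs at hd with h
  · exact hd
  · exact absurd rfl hd

lemma gvD_degreeOf (j i : ι) (p : MvPolynomial ι ℂ) : degreeOf i (gvD j p) ≤ degreeOf i p := by
  rw [degreeOf_le_iff]
  intro d hd
  rw [mem_support_iff, gvD_coeff] at hd
  split_ifs at hd with h
  · have := degreeOf_le_iff.1 (le_refl (degreeOf i p)) _ (mem_support_iff.2 hd)
    rw [Finsupp.add_apply] at this
    omega
  · exact absurd rfl hd

lemma gv_step {p : MvPolynomial ι ℂ} {m k : ℕ} (hk : 1 ≤ k) (hp : p.IsHomogeneous m)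
    (hs : HStab p) (S : Finset ι) (j : ι) (hj : j ∉ S) (hdeg : degreeOf j p ≤ k)
    (c : ℝ) (hc : 0 < c)
    (hcap : ∀ x : ι → ℝ, (∀ i, 0 < x i) → c * ∏ i ∈ insert j S, x i ≤ ‖eval (fun i => (x i : ℂ)) p‖) :
    HStab (gvD j p) ∧ ∀ x : ι → ℝ, (∀ i, 0 < x i) →
      (c * (((k : ℝ) - 1) / k) ^ (k - 1)) * ∏ i ∈ S, x i ≤ ‖eval (fun i => (x i : ℂ)) (gvD j p)‖ := by
  have hpos : ∀ x : ι → ℝ, (∀ i, 0 < x i) → ∀ t : ℝ, 0 < t → (c * ∏ i ∈ S, x i) * t ≤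
      ‖eval (Function.update (fun i => (x i : ℂ)) j (t : ℂ)) p‖ := by
    intro x hx t ht
    have := hcap (Function.update x j t) (fun i => by
      by_cases h : i = j
      · subst h; simpa using ht
      · simpa [h] using hx i)
    rw [Finset.prod_insert hj] at this
    have h1 : ∏ i ∈ S, Function.update x j t i = ∏ i ∈ S, x i := by
      refine Finset.prod_congr rfl fun i hi => ?_
      rw [Function.update_of_ne]
      rintro rfl; exact hj hi
    rw [h1, Function.update_self] at this
    have h2 : (fun i => ((Function.update x j t i : ℝ) : ℂ)) =
        Function.update (fun i => (x i : ℂ)) j (t : ℂ) := by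
      funext i
      by_cases h : i = j
      · subst h; simp
      · simp [h]
    rw [h2] at this
    linarith
  have hcapD : ∀ x : ι → ℝ, (∀ i, 0 < x i) →
      (c * (((k : ℝ) - 1) / k) ^ (k - 1)) * ∏ i ∈ S, x i ≤
        ‖eval (fun i => (x i : ℂ)) (gvD j p)‖ := by
    intro x hx
    have hP : 0 < ∏ i ∈ S, x i := Finset.prod_pos fun i _ => hx i
    have := gv_cap (gvSlice p (fun i => (x i : ℂ)) j) k hk ((gvSlice_natDegree _ _ _).trans hdeg) ?_
      (c * ∏ i ∈ S, x i) (by positivity) ?_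
    · rw [gvSlice_deriv, gvSlice_eval] at this
      rw [gvD, gvRes_eval]
      linarith
    · intro u hu
      rw [gvSlice_eval] at hu
      by_contra hcon
      have hslit : u ∈ Complex.slitPlane := by
        rw [Complex.mem_slitPlane_iff]
        by_contra h
        push Not at h
        exact hcon ⟨h.2, h.1⟩
      have hu0 : u ≠ 0 := Complex.slitPlane_ne_zero hslit
      obtain ⟨s, hs2, hsre⟩ : ∃ s : ℂ, s * s = u ∧ 0 < s.re := by
        refine ⟨Complex.exp (Complex.log u / 2), ?_, ?_⟩
        · rw [← Complex.exp_add, add_halves, Complex.exp_log hu0]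
        · rw [Complex.exp_re]
          apply mul_pos (Real.exp_pos _)
          have h1 := Complex.mem_slitPlane_iff_arg.1 hslit
          have h2 := Complex.neg_pi_lt_arg u
          have h3 := Complex.arg_le_pi u
          have h4 : u.arg < Real.pi := lt_of_le_of_ne h3 h1.1
          have h5 : (Complex.log u / 2).im = u.arg / 2 := by
            rw [Complex.div_ofNat_im, Complex.log_im]
          rw [h5]
          apply Real.cos_pos_of_mem_Ioo
          constructor <;> linarith
      have hs0 : s ≠ 0 := by rintro rfl; simp at hsre
      have hsinv : 0 < (s⁻¹).re := by
        rw [Complex.inv_re]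
        exact div_pos hsre (Complex.normSq_pos.2 hs0)
      refine hs (fun i => s⁻¹ * Function.update (fun i => (x i : ℂ)) j u i) ?_ ?_
      · intro i
        by_cases h : i = j
        · subst h
          rw [Function.update_self, ← hs2, inv_mul_cancel_left₀ hs0]
          exact hsre
        · rw [Function.update_of_ne h, mul_comm, Complex.re_ofReal_mul]
          exact mul_pos (hx i) hsinv
      · rw [gv_hom hp, hu, mul_zero]
    · intro t ht
      rw [gvSlice_eval]
      exact hpos x hx t ht
  refine ⟨?_, hcapD⟩
  have hstab' : HStab (pderiv j p) := by
    intro z hz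
    have := gv_gl (gvSlice p z j) ?_ ?_ (z j) (hz j)
    · rwa [gvSlice_deriv, gvSlice_eval, Function.update_eq_self] at this
    · intro u hu
      rw [gvSlice_eval] at hu
      by_contra hlt
      push Not at hlt
      refine hs _ ?_ hu
      intro i
      by_cases h : i = j
      · subst h; simpa using hlt
      · simpa [h] using hz i
    · intro h0
      obtain ⟨a, ha⟩ := Polynomial.natDegree_eq_zero.1 h0
      have hP : 0 < c * ∏ i ∈ S, (z i).re := mul_pos hc (Finset.prod_pos fun i _ => hz i)
      set t : ℝ := ‖a‖ / (c * ∏ i ∈ S, (z i).re) + 1 with ht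
      have htpos : 0 < t := by positivity
      have h1 := hpos (fun i => (z i).re) hz t htpos
      have h2 := gv_lemma1 hp hs (Function.update z j t) (by
        intro i
        by_cases h : i = j
        · subst h; simpa using htpos
        · simpa [h] using hz i)
      rw [← gvSlice_eval, ← ha, Polynomial.eval_C] at h2
      have h3 : (fun i => ((Function.update z j (t : ℂ) i).re : ℂ)) =
          Function.update (fun i => ((z i).re : ℂ)) j (t : ℂ) := by
        funext i
        by_cases h : i = j
        · subst h; simp
        · simp [h]
      rw [h3] at h2
      have h4 : (c * ∏ i ∈ S, (z i).re) * t = ‖a‖ + c * ∏ i ∈ S, (z i).re := by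
        rw [ht, mul_add, mul_div_cancel₀ _ hP.ne', mul_one]
      linarith
  by_cases hk1 : k = 1 ∨ 2 ≤ k
  swap
  · omega
  have hgpos : 0 < (((k : ℝ) - 1) / k) ^ (k - 1) := by
    rcases hk1 with rfl | h
    · simp
    · have : (2 : ℝ) ≤ k := by exact_mod_cast h
      apply pow_pos
      apply div_pos <;> linarith
  intro z hz h0
  have h1 := gv_lemma1' (gv_pderiv_hom hp j) hstab' (Function.update z j 0) (by
    intro i
    by_cases h : i = j
    · subst h; simp
    · simpa [h] using (hz i).le)
  rw [← gvRes_eval] at h1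
  change _ ≤ ‖eval z (gvD j p)‖ at h1
  rw [h0, norm_zero] at h1
  have h2 := hcapD (fun i => (z i).re) hz
  have h3 : (fun i => ((Function.update z j (0 : ℂ) i).re : ℂ)) =
      Function.update (fun i => ((z i).re : ℂ)) j 0 := by
    funext i
    by_cases h : i = j
    · subst h; simp
    · simp [h]
  rw [h3, ← gvRes_eval] at h1
  change ‖eval _ (gvD j p)‖ ≤ _ at h1
  have h4 : 0 < (c * (((k : ℝ) - 1) / k) ^ (k - 1)) * ∏ i ∈ S, (z i).re :=
    mul_pos (mul_pos hc hgpos) (Finset.prod_pos fun i _ => hz i)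
  linarith

/-- Gurvits' inequality. -/
lemma gv_main {k : ℕ} (hk : 1 ≤ k) (S : Finset ι) : ∀ (p : MvPolynomial ι ℂ) (m : ℕ)
    (_ : p.IsHomogeneous m) (_ : HStab p) (_ : ∀ j, degreeOf j p ≤ k)
    (c : ℝ) (_ : 0 < c)
    (_ : ∀ x : ι → ℝ, (∀ i, 0 < x i) → c * ∏ i ∈ S, x i ≤ ‖eval (fun i => (x i : ℂ)) p‖),
    c * ((((k : ℝ) - 1) / k) ^ (k - 1)) ^ S.card ≤ ‖coeff (∑ i ∈ S, Finsupp.single i 1) p‖ := by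
  have hgpos : 0 < (((k : ℝ) - 1) / k) ^ (k - 1) := by
    rcases hk.eq_or_lt with rfl | h
    · simp
    · have : (2 : ℝ) ≤ k := by exact_mod_cast h
      apply pow_pos
      apply div_pos <;> linarith
  induction S using Finset.induction_on with
  | empty =>
    intro p m hp hs hdeg c hc hcap
    simp only [Finset.card_empty, pow_zero, mul_one, Finset.sum_empty]
    have h1 : ∀ e : ℝ, 0 < e → c ≤ ‖eval (fun _ => (e : ℂ)) p‖ := by
      intro e he
      simpa using hcap (fun _ => e) (fun _ => he)
    have hc1 : Continuous fun e : ℝ => ‖eval (fun _ : ι => (e : ℂ)) p‖ :=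
      ((MvPolynomial.continuous_eval p).comp (by fun_prop)).norm
    have l1 := (hc1.tendsto 0).mono_left (nhdsWithin_le_nhds (s := Set.Ioi 0))
    have := ge_of_tendsto l1 (by
      filter_upwards [self_mem_nhdsWithin] with t h using h1 t h)
    have h2 : eval (fun _ : ι => ((0 : ℝ) : ℂ)) p = coeff 0 p := by
      have h3 : (fun _ : ι => ((0 : ℝ) : ℂ)) = 0 := by funext; simp
      rw [h3, eval_zero, constantCoeff_eq]
    rwa [h2] at this
  | insert j S hj ih =>
    intro p m hp hs hdeg c hc hcap
    obtain ⟨h1, h2⟩ := gv_step hk hp hs S j hj (hdeg j) c hc hcap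
    have := ih (gvD j p) (m - 1) (gvD_hom hp j) h1 (fun i => (gvD_degreeOf j i p).trans (hdeg i))
      _ (mul_pos hc hgpos) h2
    rw [Finset.card_insert_of_notMem hj, Finset.sum_insert hj]
    rw [gvD_coeff, if_pos, add_comm] at this
    · rw [pow_succ]; linarith
    · rw [Finsupp.finsetSum_apply]
      refine Finset.sum_eq_zero fun i hi => ?_
      rw [Finsupp.single_apply, if_neg]
      rintro rfl; exact hj hi

end gurvits

section schrijver
open MvPolynomial

variable {ι : Type} [Fintype ι] [DecidableEq ι]

lemma sch_pm (N : ι → Finset ι) (k : ℕ) (hk : 1 ≤ k) (hN : ∀ i, (N i).card = k)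
    (hN' : ∀ v, (Finset.univ.filter fun i => v ∈ N i).card = k) :
    ((k : ℝ) * (((k : ℝ) - 1) / k) ^ (k - 1)) ^ Fintype.card ι ≤
      ((Finset.univ.filter fun π : Equiv.Perm ι => ∀ i, π i ∈ N i).card : ℝ) := by
  set p : MvPolynomial ι ℂ := ∏ i, ∑ j ∈ N i, X j with hp
  have hk0 : (0 : ℝ) < k := by exact_mod_cast hk
  have hne : ∀ i, (N i).Nonempty := fun i => by rw [← Finset.card_pos, hN]; exact hk
  have heval : ∀ z : ι → ℂ, eval z p = ∏ i, ∑ j ∈ N i, z j := by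
    intro z; simp [hp, map_prod, map_sum]
  have hhom : p.IsHomogeneous (∑ i : ι, 1) := by
    apply IsHomogeneous.prod
    intro i _
    apply IsHomogeneous.sum
    intro j _
    exact isHomogeneous_X _ _
  have hst : HStab p := by
    intro z hz
    rw [heval, Finset.prod_ne_zero_iff]
    intro i _ h
    have : 0 < (∑ j ∈ N i, z j).re := by
      rw [Complex.re_sum]
      exact Finset.sum_pos (fun j _ => hz j) (hne i)
    rw [h] at this
    simp at this
  have hdeg : ∀ j, degreeOf j p ≤ k := by
    intro j
    refine (degreeOf_prod_le j _ _).trans ?_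
    rw [← hN' j, Finset.card_filter]
    refine Finset.sum_le_sum fun i _ => ?_
    refine (degreeOf_sum_le j _ _).trans ?_
    refine Finset.sup_le fun l hl => ?_
    rw [degreeOf_X]
    by_cases h : j = l
    · subst h; simp [hl]
    · simp [h]
  have hcap : ∀ x : ι → ℝ, (∀ i, 0 < x i) →
      (k : ℝ) ^ Fintype.card ι * ∏ i ∈ Finset.univ, x i ≤ ‖eval (fun i => (x i : ℂ)) p‖ := by
    intro x hx
    rw [heval]
    have h1 : ‖∏ i, ∑ j ∈ N i, (x j : ℂ)‖ = ∏ i, ∑ j ∈ N i, x j := by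
      rw [norm_prod]
      refine Finset.prod_congr rfl fun i _ => ?_
      rw [← Complex.ofReal_sum, Complex.norm_real, Real.norm_eq_abs, abs_of_nonneg]
      exact Finset.sum_nonneg fun j _ => (hx j).le
    rw [h1]
    have h2 : ∀ i, (k : ℝ) * ∏ j ∈ N i, x j ^ ((k : ℝ)⁻¹) ≤ ∑ j ∈ N i, x j := by
      intro i
      have := Real.geom_mean_le_arith_mean_weighted (N i) (fun _ => (k : ℝ)⁻¹) x
        (fun _ _ => by positivity) (by simp [hN]; field_simp) (fun j _ => (hx j).le)
      rw [← Finset.mul_sum] at this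
      calc _ ≤ (k : ℝ) * ((k : ℝ)⁻¹ * ∑ j ∈ N i, x j) := by gcongr
        _ = _ := by field_simp
    have h3 : ∏ i, ∏ j ∈ N i, x j ^ ((k : ℝ)⁻¹) = ∏ j, x j := by
      have : ∀ i, ∏ j ∈ N i, x j ^ ((k : ℝ)⁻¹) = ∏ j, if j ∈ N i then x j ^ ((k : ℝ)⁻¹) else 1 := by
        intro i; rw [Finset.prod_ite_mem, Finset.univ_inter]
      simp_rw [this]
      rw [Finset.prod_comm]
      refine Finset.prod_congr rfl fun j _ => ?_
      rw [← Finset.prod_filter, Finset.prod_const, hN' j, ← Real.rpow_natCast, ← Real.rpow_mul (hx j).le,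
        inv_mul_cancel₀ hk0.ne', Real.rpow_one]
    rw [← h3, ← Finset.card_univ, ← Finset.prod_const, ← Finset.prod_mul_distrib]
    refine Finset.prod_le_prod (fun i _ => ?_) fun i _ => h2 i
    exact mul_nonneg hk0.le (Finset.prod_nonneg fun j _ => Real.rpow_nonneg (hx j).le _)
  have hmain := gv_main hk Finset.univ p _ hhom hst hdeg _ (by positivity) hcap
  rw [Finset.card_univ, ← mul_pow] at hmain
  refine hmain.trans ?_
  have hco : coeff (∑ i : ι, Finsupp.single i 1) p =
      (((Fintype.piFinset N).filter fun f =>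
        ∑ i, Finsupp.single (f i) 1 = ∑ i : ι, Finsupp.single i 1).card : ℂ) := by
    rw [hp, Finset.prod_univ_sum, coeff_sum, Finset.card_filter, Nat.cast_sum]
    refine Finset.sum_congr rfl fun f _ => ?_
    have : ∏ i, (X (f i) : MvPolynomial ι ℂ) = monomial (∑ i, Finsupp.single (f i) 1) 1 := by
      rw [monomial_sum_one]; rfl
    rw [this, coeff_monomial]
    simp
  rw [hco, Complex.norm_natCast]
  norm_cast
  rw [← Finset.card_image_of_injective (Finset.univ.filter fun π : Equiv.Perm ι => ∀ i, π i ∈ N i)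
    (f := fun π : Equiv.Perm ι => (π : ι → ι)) DFunLike.coe_injective]
  apply Finset.card_le_card
  intro f hf
  rw [Finset.mem_filter, Fintype.mem_piFinset] at hf
  have hsurj : Function.Surjective f := by
    intro j
    have := DFunLike.congr_fun hf.2 j
    rw [Finsupp.finsetSum_apply, Finsupp.finsetSum_apply] at this
    by_contra hcon
    push Not at hcon
    rw [Finset.sum_eq_zero] at this
    · simp [Finsupp.single_apply] at this
    · intro i _
      rw [Finsupp.single_apply, if_neg (hcon i)]
  have hbij : Function.Bijective f := Finite.surjective_iff_bijective.1 hsurj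
  rw [Finset.mem_image]
  exact ⟨Equiv.ofBijective f hbij, by simpa using hf.1, rfl⟩

/-- Number of ordered 1-factorizations. -/
def numFac (k : ℕ) (N : ι → Finset ι) : ℕ :=
  (Finset.univ.filter fun σ : Fin k → Equiv.Perm ι =>
    ∀ i, Function.Injective (fun l => σ l i) ∧ Finset.univ.image (fun l => σ l i) = N i).card

lemma sch_fac (k : ℕ) : ∀ (N : ι → Finset ι) (_ : ∀ i, (N i).card = k)
    (_ : ∀ v, (Finset.univ.filter fun i => v ∈ N i).card = k),
    ((k.factorial : ℝ) ^ 2 / (k : ℝ) ^ k) ^ Fintype.card ι ≤ (numFac k N : ℝ) := by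
  induction k with
  | zero =>
    intro N hN hN'
    have h1 : numFac 0 N = 1 := by
      unfold numFac
      rw [Finset.filter_true_of_mem]
      · simp
      · intro σ _ i
        refine ⟨fun a => a.elim0, ?_⟩
        have := hN i
        rw [Finset.card_eq_zero] at this
        simp [this]
    rw [h1]; simp
  | succ k ih =>
    intro N hN hN'
    have hpm := sch_pm N (k + 1) (by omega) hN hN'
    set PM := Finset.univ.filter fun π : Equiv.Perm ι => ∀ i, π i ∈ N i with hPM
    have hle : ∑ π ∈ PM, numFac k (fun i => (N i).erase (π i)) ≤ numFac (k + 1) N := by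
      unfold numFac
      rw [← Finset.card_sigma]
      refine Finset.card_le_card_of_injOn
        (fun x : (_ : Equiv.Perm ι) × (Fin k → Equiv.Perm ι) =>
          (Fin.cons x.1 x.2 : Fin (k + 1) → Equiv.Perm ι)) ?_ ?_
      · rintro ⟨π, σ⟩ hx
        simp only [Finset.coe_sigma, Set.mem_sigma_iff, Finset.mem_coe, hPM, Finset.mem_filter,
          Finset.mem_univ, true_and] at hx
        simp only [Finset.coe_filter, Finset.mem_univ, true_and, Set.mem_ofPred_eq]
        intro i
        obtain ⟨h1, h2⟩ := hx.2 i
        have h3 : (fun l => (Fin.cons π σ : Fin (k + 1) → Equiv.Perm ι) l i) =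
            Fin.cons (π i) (fun l => σ l i) := by
          funext l
          refine Fin.cases ?_ (fun l => ?_) l <;> simp
        rw [h3]
        constructor
        · rw [Fin.cons_injective_iff]
          refine ⟨?_, h1⟩
          rintro ⟨l, hl⟩
          have : π i ∈ (N i).erase (π i) := by
            rw [← h2, Finset.mem_image]; exact ⟨l, Finset.mem_univ _, hl⟩
          simp at this
        · rw [Fin.univ_succ, Finset.cons_eq_insert, Finset.image_insert, Finset.map_eq_image, Finset.image_image]
          simp only [Fin.cons_zero]
          have : ((Fin.cons (π i) fun l => σ l i : Fin (k + 1) → ι) ∘ (⟨Fin.succ, Fin.succ_injective k⟩ : Fin k ↪ Fin (k+1))) = fun l => σ l i := by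
            funext l; simp
          rw [this, h2, Finset.insert_erase (hx.1 i)]
      · rintro ⟨π, σ⟩ _ ⟨π', σ'⟩ _ h
        simp only [Fin.cons_inj] at h
        obtain ⟨rfl, rfl⟩ := h
        rfl
    have hge : ∀ π ∈ PM, ((k.factorial : ℝ) ^ 2 / (k : ℝ) ^ k) ^ Fintype.card ι ≤
        (numFac k (fun i => (N i).erase (π i)) : ℝ) := by
      intro π hπ
      rw [hPM, Finset.mem_filter] at hπ
      apply ih
      · intro i
        rw [Finset.card_erase_of_mem (hπ.2 i), hN]; rfl
      · intro v
        have : (Finset.univ.filter fun i => v ∈ (N i).erase (π i)) =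
            (Finset.univ.filter fun i => v ∈ N i).erase (π.symm v) := by
          ext i
          simp only [Finset.mem_filter, Finset.mem_univ, true_and, Finset.mem_erase]
          rw [Ne, Ne, Equiv.eq_symm_apply, eq_comm]
        rw [this, Finset.card_erase_of_mem, hN']
        · rfl
        · have := hπ.2 (π.symm v)
          simpa using this
    have hle' : (∑ π ∈ PM, (numFac k (fun i => (N i).erase (π i)) : ℝ)) ≤ numFac (k + 1) N := by
      exact_mod_cast hle
    refine le_trans ?_ hle'
    refine le_trans ?_ (Finset.sum_le_sum hge)
    rw [Finset.sum_const, nsmul_eq_mul]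
    refine le_trans ?_ (mul_le_mul_of_nonneg_right hpm (by positivity))
    rw [← mul_pow]
    apply le_of_eq
    congr 1
    rw [Nat.factorial_succ]
    push_cast
    simp only [add_sub_cancel_right]
    rcases Nat.eq_zero_or_pos k with rfl | hk
    · simp
    · have : (0 : ℝ) < k := by exact_mod_cast hk
      rw [div_pow]
      field_simp
      try ring

end schrijver

section shearerSec

lemma holder_aux {V κ : Type} (B : Finset V) (s : Finset κ) (d : ℕ) (hd : 0 < d) (hB : B.card = d)
    (K : ℝ) (hK : 0 ≤ K) (y : κ → ℝ) (hy : ∀ a ∈ s, 0 ≤ y a) (x : V → κ → ℝ)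
    (hx : ∀ v ∈ B, ∀ a ∈ s, 0 ≤ x v a) (h : ∀ a ∈ s, y a ^ d ≤ K * ∏ v ∈ B, x v a) :
    (∑ a ∈ s, y a) ^ d ≤ K * ∏ v ∈ B, ∑ a ∈ s, x v a := by
  have hX0 : ∀ v ∈ B, 0 ≤ ∑ a ∈ s, x v a := fun v hv => Finset.sum_nonneg fun a ha => hx v hv a ha
  have hd0 : (0 : ℝ) < d := by exact_mod_cast hd
  by_cases hz : ∃ v ∈ B, ∑ a ∈ s, x v a = 0
  · obtain ⟨v, hv, hv0⟩ := hz
    rw [Finset.sum_eq_zero_iff_of_nonneg fun a ha => hx v hv a ha] at hv0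
    have hy0 : ∀ a ∈ s, y a = 0 := by
      intro a ha
      have h1 := h a ha
      rw [Finset.prod_eq_zero hv (hv0 a ha), mul_zero] at h1
      have h2 := pow_nonneg (hy a ha) d
      exact pow_eq_zero_iff hd.ne' |>.1 (le_antisymm h1 h2)
    rw [Finset.sum_eq_zero hy0, zero_pow hd.ne']
    exact mul_nonneg hK (Finset.prod_nonneg hX0)
  push Not at hz
  have hXpos : ∀ v ∈ B, 0 < ∑ a ∈ s, x v a := fun v hv => lt_of_le_of_ne (hX0 v hv) (hz v hv).symm
  set Q : ℝ := K * ∏ v ∈ B, ∑ a ∈ s, x v a with hQ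
  have hQ0 : 0 ≤ Q := mul_nonneg hK (Finset.prod_nonneg hX0)
  have key : ∀ a ∈ s, y a ≤ Q ^ ((d : ℝ)⁻¹) * ∑ v ∈ B, (d : ℝ)⁻¹ * (x v a / ∑ a ∈ s, x v a) := by
    intro a ha
    have h1 := Real.geom_mean_le_arith_mean_weighted B (fun _ => (d : ℝ)⁻¹)
      (fun v => x v a / ∑ a ∈ s, x v a) (fun _ _ => by positivity) (by simp [hB]; field_simp)
      (fun v hv => div_nonneg (hx v hv a ha) (hX0 v hv))
    have h2 : y a ≤ (K * ∏ v ∈ B, x v a) ^ ((d : ℝ)⁻¹) := by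
      calc y a = (y a ^ d) ^ ((d : ℝ)⁻¹) := by rw [Real.pow_rpow_inv_natCast (hy a ha) hd.ne']
        _ ≤ _ := Real.rpow_le_rpow (pow_nonneg (hy a ha) d) (h a ha) (by positivity)
    refine h2.trans ?_
    have h3 : K * ∏ v ∈ B, x v a = Q * ∏ v ∈ B, (x v a / ∑ a ∈ s, x v a) := by
      rw [hQ, mul_assoc, ← Finset.prod_mul_distrib]
      congr 1
      refine Finset.prod_congr rfl fun v hv => ?_
      rw [mul_div_cancel₀ _ (hXpos v hv).ne']
    rw [h3, Real.mul_rpow hQ0 (Finset.prod_nonneg fun v hv => div_nonneg (hx v hv a ha) (hX0 v hv)),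
      ← Real.finsetProd_rpow _ _ (fun v hv => div_nonneg (hx v hv a ha) (hX0 v hv))]
    gcongr
  have hsum : ∑ a ∈ s, y a ≤ Q ^ ((d : ℝ)⁻¹) := by
    refine (Finset.sum_le_sum key).trans ?_
    rw [← Finset.mul_sum, Finset.sum_comm]
    have : ∑ v ∈ B, ∑ a ∈ s, (d : ℝ)⁻¹ * (x v a / ∑ a ∈ s, x v a) = 1 := by
      have h4 : ∀ v ∈ B, ∑ a ∈ s, (d : ℝ)⁻¹ * (x v a / ∑ a ∈ s, x v a) = (d : ℝ)⁻¹ := by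
        intro v hv
        rw [← Finset.mul_sum, ← Finset.sum_div, div_self (hXpos v hv).ne', mul_one]
      rw [Finset.sum_congr rfl h4, Finset.sum_const, hB, nsmul_eq_mul]
      field_simp
    rw [this, mul_one]
  calc _ ≤ (Q ^ ((d : ℝ)⁻¹)) ^ d := pow_le_pow_left₀ (Finset.sum_nonneg hy) hsum d
    _ = Q := Real.rpow_inv_natCast_pow hQ0 hd.ne'

lemma shearer_aux {E V κ : Type} [Fintype V] [DecidableEq E] [Fintype κ] [DecidableEq κ]
    (A : V → Finset E) (d : ℕ) (hd : 0 < d) (U : Finset E)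
    [DecidableEq (E → κ)] :
    ∀ F : Finset (E → κ), (∀ f ∈ F, ∀ g ∈ F, ∀ i ∉ U, f i = g i) →
      (∀ i ∈ U, (Finset.univ.filter fun v => i ∈ A v).card = d) →
      (F.card : ℝ) ^ d ≤ ∏ v, ((F.image (fun f (i : A v) => f i)).card : ℝ) := by
  induction U using Finset.induction_on with
  | empty =>
    intro F hF _
    rcases F.eq_empty_or_nonempty with rfl | hne
    · simp only [Finset.card_empty, Nat.cast_zero, zero_pow hd.ne']
      exact Finset.prod_nonneg fun v _ => Nat.cast_nonneg _
    · have h1 : F.card ≤ 1 := Finset.card_le_one.2 fun f hf g hg => by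
        funext i; exact hF f hf g hg i (by simp)
      have h2 : (F.card : ℝ) ^ d ≤ 1 := pow_le_one₀ (by positivity) (by exact_mod_cast h1)
      refine h2.trans ?_
      rw [← Finset.prod_const_one (s := (Finset.univ : Finset V))]
      refine Finset.prod_le_prod (fun _ _ => zero_le_one) fun v _ => ?_
      have : 0 < (F.image (fun f (i : A v) => f i)).card := Finset.card_pos.2 (hne.image _)
      exact_mod_cast this
  | insert i0 U hi0 ih =>
    intro F hF hU
    have hcard : (F.card : ℝ) = ∑ a : κ, ((F.filter fun f => f i0 = a).card : ℝ) := by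
      rw [Finset.card_eq_sum_card_fiberwise (f := fun f => f i0) (t := Finset.univ)
        (fun _ _ => by simp)]
      push_cast; rfl
    set B := Finset.univ.filter fun v => i0 ∈ A v with hB
    set B' := Finset.univ.filter fun v => ¬ i0 ∈ A v with hB'
    have hsplit : ∀ g : V → ℝ, ∏ v, g v = (∏ v ∈ B', g v) * ∏ v ∈ B, g v := by
      intro g
      rw [mul_comm, Finset.prod_filter_mul_prod_filter_not]
    rw [hsplit, hcard]
    have himg : ∀ v ∈ B, ((F.image (fun f (i : A v) => f i)).card : ℝ) =
        ∑ a : κ, (((F.filter fun f => f i0 = a).image (fun f (i : A v) => f i)).card : ℝ) := by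
      intro v hv
      have hv' : i0 ∈ A v := by simpa [hB] using hv
      rw [Finset.card_eq_sum_card_fiberwise (f := fun f : A v → κ => f ⟨i0, hv'⟩)
        (t := Finset.univ) (fun _ _ => by simp)]
      push_cast
      refine Finset.sum_congr rfl fun a _ => ?_
      rw [Finset.filter_image]
    rw [Finset.prod_congr rfl himg]
    refine holder_aux B Finset.univ d hd (hU i0 (by simp)) _
      (Finset.prod_nonneg fun v _ => Nat.cast_nonneg _) _ (fun _ _ => Nat.cast_nonneg _) _
      (fun _ _ _ _ => Nat.cast_nonneg _) ?_
    intro a _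
    have := ih (F.filter fun f => f i0 = a) ?_ (fun i hi => hU i (by simp [hi]))
    · refine this.trans ?_
      rw [hsplit]
      refine mul_le_mul_of_nonneg_right ?_ (Finset.prod_nonneg fun v _ => Nat.cast_nonneg _)
      refine Finset.prod_le_prod (fun _ _ => Nat.cast_nonneg _) fun v _ => ?_
      exact_mod_cast Finset.card_le_card (Finset.image_subset_image (Finset.filter_subset _ _))
    · intro f hf g hg i hi
      rw [Finset.mem_filter] at hf hg
      by_cases h : i = i0
      · subst h; rw [hf.2, hg.2]
      · exact hF f hf.1 g hg.1 i (by simp [h, hi])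

end shearerSec

section counting

open scoped Classical in
/-- proper colorings of an edge sequence into 1-factors -/
noncomputable def colSet {n : ℕ} (d : ℕ) (e : Fin n → Finset (Fin n)) : Finset (Fin n → Fin d) :=
  Finset.univ.filter fun c => ∀ v k, ∃! i, v ∈ e i ∧ c i = k

open scoped Classical in
/-- regular edge sequences -/
noncomputable def regSet {n : ℕ} (d : ℕ) (W : Finset (Finset (Fin n))) :
    Finset (Fin n → Finset (Fin n)) :=
  Finset.univ.filter fun e => (∀ i, e i ∈ W) ∧
    ∀ v, (Finset.univ.filter fun i => v ∈ e i).card = d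

lemma mem_colSet {n d : ℕ} {e : Fin n → Finset (Fin n)} {c : Fin n → Fin d} :
    c ∈ colSet d e ↔ ∀ v k, ∃! i, v ∈ e i ∧ c i = k := by
  classical
  simp [colSet]

lemma col_inj {n d : ℕ} {e : Fin n → Finset (Fin n)} {c : Fin n → Fin d} (hc : c ∈ colSet d e)
    (v : Fin n) {i j : Fin n} (hi : v ∈ e i) (hj : v ∈ e j) (h : c i = c j) : i = j := by
  rw [mem_colSet] at hc
  exact (hc v (c j)).unique ⟨hi, h⟩ ⟨hj, rfl⟩

lemma col_star {n d : ℕ} {e : Fin n → Finset (Fin n)} {c : Fin n → Fin d} (hc : c ∈ colSet d e)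
    (v : Fin n) : (Finset.univ.filter fun i => v ∈ e i).card = d := by
  have : (Finset.univ.filter fun i => v ∈ e i).card = (Finset.univ : Finset (Fin d)).card := by
    refine Finset.card_bij (fun i _ => c i) (fun _ _ => Finset.mem_univ _) ?_ ?_
    · intro i hi j hj h
      exact col_inj hc v (by simpa using hi) (by simpa using hj) h
    · intro k _
      have hc' := hc
      rw [mem_colSet] at hc'
      obtain ⟨i, hi, _⟩ := hc' v k
      exact ⟨i, by simpa using hi.1, hi.2⟩
  rw [this]; simp

lemma col_card {n d : ℕ} (hd : 0 < d) (e : Fin n → Finset (Fin n)) (he : ∀ i, (e i).card = d) :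
    ((colSet d e).card : ℝ) ^ d ≤ (d.factorial : ℝ) ^ n := by
  rcases (colSet d e).eq_empty_or_nonempty with h | ⟨c0, hc0⟩
  · rw [h]; simp only [Finset.card_empty, Nat.cast_zero, zero_pow hd.ne']; positivity
  refine (shearer_aux (fun v => Finset.univ.filter fun i => v ∈ e i) d hd Finset.univ (colSet d e)
    (fun _ _ _ _ i hi => absurd (Finset.mem_univ i) hi) ?_).trans ?_
  · intro i _
    rw [← he i]
    congr 1
    ext v; simp
  · have : (d.factorial : ℝ) ^ n = ∏ v : Fin n, (d.factorial : ℝ) := by simp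
    rw [this]
    refine Finset.prod_le_prod (fun _ _ => Nat.cast_nonneg _) fun v _ => ?_
    norm_cast
    set A := Finset.univ.filter fun i => v ∈ e i with hA
    have hAc : Fintype.card A = Fintype.card (Fin d) := by
      rw [Fintype.card_coe, col_star hc0 v, Fintype.card_fin]
    have h2 : Fintype.card (A ≃ Fin d) = d.factorial := by
      rw [Fintype.card_equiv (Fintype.equivOfCardEq hAc), hAc, Fintype.card_fin]
    rw [← h2, ← Finset.card_univ]
    refine le_trans (Finset.card_le_card ?_)
      (Finset.card_image_le (f := fun (g : A ≃ Fin d) (i : A) => g i))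
    intro g hg
    rw [Finset.mem_image] at hg
    obtain ⟨c, hc, rfl⟩ := hg
    have hinj : Function.Injective fun i : A => c i := by
      rintro ⟨i, hi⟩ ⟨j, hj⟩ h
      apply Subtype.ext
      exact col_inj hc v (by simpa [hA] using hi) (by simpa [hA] using hj) h
    have hbij := (Fintype.bijective_iff_injective_and_card _).2 ⟨hinj, hAc⟩
    rw [Finset.mem_image]
    exact ⟨Equiv.ofBijective _ hbij, Finset.mem_univ _, rfl⟩

lemma fac_card {n d : ℕ} (hd : 0 < d) (W : Finset (Finset (Fin n))) :
    ∑ e ∈ regSet d W, numFac d e ≤ n.factorial * mper (adjMatrix n d W) := by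
  classical
  have hm : mper (adjMatrix n d W) = (Finset.univ.filter fun σ : Fin d → Equiv.Perm (Fin n) =>
      σ ⟨0, hd⟩ = Equiv.refl (Fin n) ∧ ∀ i, Function.Injective (fun k => σ k i) ∧
        Finset.image (fun k => σ k i) Finset.univ ∈ W).card := by
    unfold mper adjMatrix
    rw [← Finset.filter_filter, Finset.card_filter]
    refine Finset.sum_congr ?_ fun σ _ => ?_
    · ext σ; simp [hd]
    · rw [Finset.prod_ite_zero]
      simp
  rw [hm]
  have hn : n.factorial = (Finset.univ : Finset (Equiv.Perm (Fin n))).card := by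
    rw [Finset.card_univ, Fintype.card_perm, Fintype.card_fin]
  rw [hn, ← Finset.card_product]
  unfold numFac
  rw [← Finset.card_sigma]
  refine Finset.card_le_card_of_injOn
    (fun x : (_ : Fin n → Finset (Fin n)) × (Fin d → Equiv.Perm (Fin n)) =>
      (x.2 ⟨0, hd⟩, fun k => x.2 k * (x.2 ⟨0, hd⟩)⁻¹)) ?_ ?_
  · rintro ⟨e, σ⟩ hx
    simp only [Finset.mem_coe, Finset.mem_sigma, Finset.mem_filter, Finset.mem_univ, true_and,
      regSet] at hx
    simp only [Finset.mem_coe, Finset.mem_product, Finset.mem_filter, Finset.mem_univ, true_and]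
    refine ⟨mul_inv_cancel _, fun i => ?_⟩
    obtain ⟨h1, h2⟩ := hx.2 ((σ ⟨0, hd⟩)⁻¹ i)
    refine ⟨h1, ?_⟩
    have := hx.1.1 ((σ ⟨0, hd⟩)⁻¹ i)
    rw [← h2] at this
    exact this
  · rintro ⟨e, σ⟩ hx ⟨e', σ'⟩ hx' h
    simp only [Finset.mem_coe, Finset.mem_sigma, Finset.mem_filter, Finset.mem_univ, true_and]
      at hx hx'
    simp only [Prod.mk.injEq] at h
    have hσ : σ = σ' := by
      funext k
      have := congrFun h.2 k
      rw [h.1] at this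
      exact mul_right_cancel this
    subst hσ
    have he : e = e' := by
      funext i
      rw [← (hx.2 i).2, ← (hx'.2 i).2]
    subst he
    rfl

lemma factor_card {n d : ℕ} (hd : 0 < d) (W : Finset (Finset (Fin n)))
    (hW : ∀ e ∈ W, e.card = d) :
    numOneFactors W ^ d * n.factorial ≤ ∑ e ∈ regSet d W, (colSet d e).card := by
  classical
  set Φ : Finset (Finset (Finset (Fin n))) := Finset.univ.filter fun P => IsOneFactor W P with hΦ
  have hφ : numOneFactors W = Φ.card := by
    unfold numOneFactors
    rw [← Set.ncard_coe_finset]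
    congr 1
    ext P; simp [hΦ]
  have hsz : ∀ P ∈ Φ, P.card * d = n := by
    intro P hP
    rw [hΦ, Finset.mem_filter] at hP
    have h1 := Finset.sum_card (B := P) (n := 1) (by
      intro v
      obtain ⟨x, hx, hu⟩ := hP.2.2 v
      rw [Finset.card_eq_one]
      refine ⟨x, ?_⟩
      ext y
      simp only [Finset.mem_filter, Finset.mem_singleton]
      constructor
      · exact fun h => hu y h
      · rintro rfl; exact hx)
    rw [Finset.sum_congr rfl fun x hx => hW x (hP.2.1 hx), Finset.sum_const, smul_eq_mul] at h1
    simpa using h1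
  have hcnt : ∀ P ∈ Fintype.piFinset (fun _ : Fin d => Φ),
      (Finset.univ : Finset (Fin n ≃ Σ k, ↥(P k))).card = n.factorial := by
    intro P hP
    rw [Fintype.mem_piFinset] at hP
    have hc : Fintype.card (Fin n) = Fintype.card (Σ k, ↥(P k)) := by
      rw [Fintype.card_sigma, Fintype.card_fin]
      simp only [Fintype.card_coe]
      have : ∀ k ∈ Finset.univ, (P k).card = n / d := fun k _ => by
        rw [Nat.eq_div_iff_mul_eq_left hd.ne' ⟨(P k).card, by rw [mul_comm]; exact (hsz _ (hP k)).symm⟩]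
        exact (hsz _ (hP k)).symm
      rw [Finset.sum_congr rfl this, Finset.sum_const, Finset.card_univ, Fintype.card_fin, smul_eq_mul,
        Nat.mul_div_cancel']
      exact ⟨(P ⟨0, hd⟩).card, by rw [mul_comm]; exact (hsz _ (hP _)).symm⟩
    rw [Finset.card_univ, Fintype.card_equiv (Fintype.equivOfCardEq hc), Fintype.card_fin]
  have hL : numOneFactors W ^ d * n.factorial =
      ((Fintype.piFinset (fun _ : Fin d => Φ)).sigma
        fun P => (Finset.univ : Finset (Fin n ≃ Σ k, ↥(P k)))).card := by
    rw [Finset.card_sigma, Finset.sum_congr rfl hcnt, Finset.sum_const, Fintype.card_piFinset, hφ]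
    simp
  rw [hL, ← Finset.card_sigma]
  refine Finset.card_le_card_of_injOn
    (fun x => (⟨fun i => ((x.2 i).2 : Finset (Fin n)), fun i => (x.2 i).1⟩ :
      (_ : Fin n → Finset (Fin n)) × (Fin n → Fin d))) ?_ ?_
  · rintro ⟨P, b⟩ hx
    simp only [Finset.mem_coe, Finset.mem_sigma, Fintype.mem_piFinset, Finset.mem_univ, and_true] at hx
    have hP : ∀ k, IsOneFactor W (P k) := fun k => by
      have := hx k
      rw [hΦ, Finset.mem_filter] at this
      exact this.2
    have hcol : (fun i => (b i).1) ∈ colSet d (fun i => ((b i).2 : Finset (Fin n))) := by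
      rw [mem_colSet]
      intro v k
      obtain ⟨x, hx, hu⟩ := (hP k).2 v
      refine ⟨b.symm ⟨k, x, hx.1⟩, ?_, ?_⟩
      · have key : ∀ y, y = (⟨k, x, hx.1⟩ : Σ k, ↥(P k)) →
            v ∈ (y.2 : Finset (Fin n)) ∧ y.1 = k := by
          rintro _ rfl
          exact ⟨hx.2, rfl⟩
        exact key _ (b.apply_symm_apply _)
      · rintro i ⟨hi, rfl⟩
        rw [Equiv.eq_symm_apply]
        have := hu (b i).2 ⟨(b i).2.2, hi⟩
        refine Sigma.ext rfl (heq_of_eq (Subtype.ext this))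
    simp only [Finset.mem_coe, Finset.mem_sigma]
    refine ⟨?_, hcol⟩
    rw [regSet, Finset.mem_filter]
    exact ⟨Finset.mem_univ _, fun i => (hP _).1 (b i).2.2, fun v => col_star hcol v⟩
  · rintro ⟨P, b⟩ _ ⟨P', b'⟩ _ h
    simp only [Sigma.mk.injEq, heq_eq_eq] at h
    obtain ⟨h1, h2⟩ := h
    have hrec : ∀ (P : Fin d → Finset (Finset (Fin n))) (b : Fin n ≃ Σ k, ↥(P k)) k x,
        x ∈ P k ↔ ∃ i, (b i).1 = k ∧ ((b i).2 : Finset (Fin n)) = x := by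
      intro P b k x
      constructor
      · intro hx
        have key : ∀ y, y = (⟨k, x, hx⟩ : Σ k, ↥(P k)) →
            y.1 = k ∧ (y.2 : Finset (Fin n)) = x := by
          rintro _ rfl
          exact ⟨rfl, rfl⟩
        exact ⟨b.symm ⟨k, x, hx⟩, key _ (b.apply_symm_apply _)⟩
      · rintro ⟨i, rfl, rfl⟩
        exact (b i).2.2
    have hP : P = P' := by
      funext k
      ext x
      rw [hrec P b, hrec P' b']
      constructor
      · rintro ⟨i, p, q⟩
        exact ⟨i, (congrFun h2 i).symm.trans p, (congrFun h1 i).symm.trans q⟩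
      · rintro ⟨i, p, q⟩
        exact ⟨i, (congrFun h2 i).trans p, (congrFun h1 i).trans q⟩
    subst hP
    have hb : b = b' := by
      ext1 i
      have e1 : ((b i).2 : Finset (Fin n)) = (b' i).2 := congrFun h1 i
      have e2 : (b i).1 = (b' i).1 := congrFun h2 i
      generalize b i = y at e1 e2
      generalize b' i = y' at e1 e2
      obtain ⟨k, x, hx⟩ := y
      obtain ⟨k', x', hx'⟩ := y'
      dsimp only at e1 e2
      subst e1; subst e2
      rfl
    subst hb
    rfl

end counting

/-- For a simple `d`-uniform hypergraph `G` on `n` vertices with `d ≥ 4` and `d ∣ n`,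
the number of 1-factors satisfies `φ(G) ≤ (per M(G) / μ(n,d))^(1/d)`, where
`μ(n,d) = (d!² / (d^d · d!^(1/d)))^n`. -/
theorem stmt8 (n d : ℕ) (hd : 4 ≤ d) (hdn : d ∣ n) (W : Finset (Finset (Fin n)))
    (huniform : ∀ e ∈ W, e.card = d) :
    (numOneFactors W : ℝ) ≤
      ((mper (adjMatrix n d W) : ℝ) /
        (((d.factorial : ℝ) ^ 2 /
          ((d : ℝ) ^ d * (d.factorial : ℝ) ^ ((1 : ℝ) / d))) ^ n)) ^ ((1 : ℝ) / d) := by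
  have hd0 : 0 < d := by omega
  have hdR : (0 : ℝ) < d := by exact_mod_cast hd0
  have hfR : (0 : ℝ) < d.factorial := by exact_mod_cast d.factorial_pos
  have hnR : (0 : ℝ) < n.factorial := by exact_mod_cast n.factorial_pos
  set L : ℝ := (d.factorial : ℝ) ^ ((1 : ℝ) / d) with hL
  have hLpos : 0 < L := Real.rpow_pos_of_pos hfR _
  have hLd : L ^ d = d.factorial := by
    rw [hL, one_div, Real.rpow_inv_natCast_pow hfR.le hd0.ne']
  set M : ℝ := (mper (adjMatrix n d W) : ℝ) with hM
  set φ : ℝ := (numOneFactors W : ℝ) with hφ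
  have hreg : ∀ e ∈ regSet d W, (∀ i, (e i).card = d) ∧
      ∀ v, (Finset.univ.filter fun i => v ∈ e i).card = d := by
    intro e he
    rw [regSet, Finset.mem_filter] at he
    exact ⟨fun i => huniform _ (he.2.1 i), he.2.2⟩
  have h1 : φ ^ d * n.factorial ≤ (regSet d W).card * L ^ n := by
    have := factor_card hd0 W huniform
    have h2 : φ ^ d * n.factorial ≤ ∑ e ∈ regSet d W, ((colSet d e).card : ℝ) := by
      rw [hφ]; exact_mod_cast this
    refine h2.trans ?_
    rw [← nsmul_eq_mul, ← Finset.sum_const]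
    refine Finset.sum_le_sum fun e he => ?_
    have h3 := col_card hd0 e (hreg e he).1
    rw [← hLd, ← pow_mul, mul_comm, pow_mul] at h3
    exact le_of_pow_le_pow_left₀ hd0.ne' (by positivity) h3
  have h2 : (regSet d W).card * ((d.factorial : ℝ) ^ 2 / (d : ℝ) ^ d) ^ n ≤ n.factorial * M := by
    have h3 : (∑ e ∈ regSet d W, (numFac d e : ℝ)) ≤ n.factorial * M := by
      rw [hM]; exact_mod_cast fac_card hd0 W
    refine le_trans ?_ h3
    rw [← nsmul_eq_mul, ← Finset.sum_const]
    refine Finset.sum_le_sum fun e he => ?_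
    have := sch_fac d e (hreg e he).1 (hreg e he).2
    rwa [Fintype.card_fin] at this
  set Q : ℝ := ((d.factorial : ℝ) ^ 2 / (d : ℝ) ^ d) ^ n with hQ
  have hQpos : 0 < Q := by positivity
  have h3 : φ ^ d * Q ≤ M * L ^ n := by
    have h4 : (φ ^ d * Q) * n.factorial ≤ (M * L ^ n) * n.factorial := by
      calc _ = (φ ^ d * n.factorial) * Q := by ring
        _ ≤ ((regSet d W).card * L ^ n) * Q := by gcongr
        _ = ((regSet d W).card * Q) * L ^ n := by ring
        _ ≤ (n.factorial * M) * L ^ n := by gcongr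
        _ = _ := by ring
    exact le_of_mul_le_mul_right h4 hnR
  have hmu : ((d.factorial : ℝ) ^ 2 / ((d : ℝ) ^ d * L)) ^ n = Q / L ^ n := by
    rw [hQ, ← div_pow, div_div]
  rw [hmu]
  have h5 : φ ^ d ≤ M / (Q / L ^ n) := by
    rw [le_div_iff₀ (by positivity), ← mul_div_assoc, div_le_iff₀ (by positivity)]
    exact h3
  have hφ0 : 0 ≤ φ := Nat.cast_nonneg _
  calc φ = (φ ^ d) ^ ((1 : ℝ) / d) := by rw [one_div, Real.pow_rpow_inv_natCast hφ0 hd0.ne']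
    _ ≤ _ := Real.rpow_le_rpow (by positivity) h5 (by positivity)
end

section
/- Let G be a simple 3-uniform hypergraph on n vertices with 3 dividing n. Then the number of 1-factors of G satisfies φ(G) ≤ ((3/2^{3/2})^n · per M(G))^{1/3}. -/
/-! ### Voorhoeve's lower bound -/

def DecAt {n : ℕ} (A : Matrix (Fin n) (Fin n) ℕ) (i0 j0 : Fin n) : Matrix (Fin n) (Fin n) ℕ :=
  fun i j => if i = i0 ∧ j = j0 then A i j - 1 else A i j

def Cub {n : ℕ} (A : Matrix (Fin n) (Fin n) ℕ) : Prop :=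
  (∀ i, ∑ j, A i j = 3) ∧ (∀ j, ∑ i, A i j = 3)

def Defic {n : ℕ} (A : Matrix (Fin n) (Fin n) ℕ) (i0 j0 : Fin n) : Prop :=
  (∀ i, ∑ j, A i j + (if i = i0 then 1 else 0) = 3) ∧
  (∀ j, ∑ i, A i j + (if j = j0 then 1 else 0) = 3)

theorem col_lin {n : ℕ} (A : Matrix (Fin n) (Fin n) ℕ) (j0 : Fin n) :
    ∃ m : Fin n → ℕ, ∀ B : Matrix (Fin n) (Fin n) ℕ, (∀ i j, j ≠ j0 → B i j = A i j) →
      B.permanent = ∑ i, B i j0 * m i := by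
  refine ⟨fun i => ∑ σ : Equiv.Perm (Fin n) with σ j0 = i,
    ∏ j ∈ Finset.univ.erase j0, A (σ j) j, fun B hB => ?_⟩
  unfold Matrix.permanent
  rw [← Finset.sum_fiberwise (s := Finset.univ) (g := fun σ : Equiv.Perm (Fin n) => σ j0)]
  refine Finset.sum_congr rfl fun i _ => ?_
  rw [Finset.mul_sum]
  refine Finset.sum_congr rfl fun σ hσ => ?_
  simp only [Finset.mem_filter, Finset.mem_univ, true_and] at hσ
  rw [← Finset.mul_prod_erase _ _ (Finset.mem_univ j0), hσ]
  congr 1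
  refine Finset.prod_congr rfl fun j hj => ?_
  exact hB _ _ (Finset.ne_of_mem_erase hj)

theorem row_lin {n : ℕ} (A : Matrix (Fin n) (Fin n) ℕ) (i0 : Fin n) :
    ∃ m : Fin n → ℕ, ∀ B : Matrix (Fin n) (Fin n) ℕ, (∀ i j, i ≠ i0 → B i j = A i j) →
      B.permanent = ∑ j, B i0 j * m j := by
  obtain ⟨m, hm⟩ := col_lin A.transpose i0
  refine ⟨m, fun B hB => ?_⟩
  rw [← Matrix.permanent_transpose, hm B.transpose (fun i j h => hB j i h)]
  rfl

theorem row_avg {n : ℕ} (A : Matrix (Fin n) (Fin n) ℕ) (i0 : Fin n) (s G K : ℕ)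
    (hs : ∑ j, A i0 j = s + 1)
    (hG : ∀ j, A i0 j ≠ 0 → G ≤ K * (DecAt A i0 j).permanent) :
    (s + 1) * G ≤ K * (s * A.permanent) := by
  obtain ⟨m, hm⟩ := row_lin A i0
  have hA := hm A (fun _ _ _ => rfl)
  have h1 : ∀ j, A i0 j ≠ 0 → (DecAt A i0 j).permanent + m j = A.permanent := by
    intro j hj
    rw [hm (DecAt A i0 j) (fun i k h => by simp [DecAt, h]), hA]
    rw [← Finset.add_sum_erase _ _ (Finset.mem_univ j),
      ← Finset.add_sum_erase (a := j) _ (fun j => A i0 j * m j) (Finset.mem_univ j)]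
    have : ∑ x ∈ Finset.univ.erase j, DecAt A i0 j i0 x * m x
        = ∑ x ∈ Finset.univ.erase j, A i0 x * m x := by
      refine Finset.sum_congr rfl fun x hx => ?_
      simp [DecAt, Finset.ne_of_mem_erase hx]
    rw [this]
    obtain ⟨a, ha⟩ := Nat.exists_eq_succ_of_ne_zero hj
    simp [DecAt, ha]
    ring
  have h2 : ∑ j, A i0 j * (DecAt A i0 j).permanent + A.permanent = (s + 1) * A.permanent := by
    conv_lhs => rw [hA]
    rw [← Finset.sum_add_distrib, ← hs, Finset.sum_mul]
    refine Finset.sum_congr rfl fun j _ => ?_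
    by_cases hj : A i0 j = 0
    · simp [hj]
    · rw [← h1 j hj]; ring
  have h3 : ∑ j, A i0 j * (DecAt A i0 j).permanent = s * A.permanent := by linarith
  rw [← h3, ← hs, Finset.sum_mul, Finset.mul_sum]
  refine Finset.sum_le_sum fun j _ => ?_
  by_cases hj : A i0 j = 0
  · simp [hj]
  · calc A i0 j * G ≤ A i0 j * (K * (DecAt A i0 j).permanent) := Nat.mul_le_mul_left _ (hG j hj)
      _ = _ := by ring

theorem decAt_row {n : ℕ} (A : Matrix (Fin n) (Fin n) ℕ) (i0 j0 : Fin n) (h : A i0 j0 ≠ 0)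
    (i : Fin n) : ∑ j, DecAt A i0 j0 i j + (if i = i0 then 1 else 0) = ∑ j, A i j := by
  have : ∀ j, A i j = DecAt A i0 j0 i j + (if j = j0 then (if i = i0 then 1 else 0) else 0) := by
    intro j
    unfold DecAt
    by_cases h1 : i = i0 <;> by_cases h2 : j = j0 <;> simp [h1, h2]
    omega
  simp_rw [this]
  simp [Finset.sum_add_distrib]

theorem decAt_col {n : ℕ} (A : Matrix (Fin n) (Fin n) ℕ) (i0 j0 : Fin n) (h : A i0 j0 ≠ 0)
    (j : Fin n) : ∑ i, DecAt A i0 j0 i j + (if j = j0 then 1 else 0) = ∑ i, A i j := by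
  have : ∀ i, A i j = DecAt A i0 j0 i j + (if i = i0 then (if j = j0 then 1 else 0) else 0) := by
    intro i
    unfold DecAt
    by_cases h1 : i = i0 <;> by_cases h2 : j = j0 <;> simp [h1, h2]
    omega
  simp_rw [this]
  simp [Finset.sum_add_distrib]

theorem cub_of_defic {n : ℕ}
    (hg : ∀ (A : Matrix (Fin (n+1)) (Fin (n+1)) ℕ) i0 j0, Defic A i0 j0 →
      2 * 4 ^ n ≤ 3 ^ n * A.permanent)
    (A : Matrix (Fin (n+1)) (Fin (n+1)) ℕ) (hA : Cub A) :
    3 * 4 ^ n ≤ 3 ^ n * A.permanent := by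
  have := row_avg A 0 2 (2 * 4 ^ n) (3 ^ n) (hA.1 0) (fun j hj => hg _ 0 j
    ⟨fun i => by rw [decAt_row A 0 j hj, hA.1], fun i => by rw [decAt_col A 0 j hj, hA.2]⟩)
  nlinarith

theorem perm_col_zero {n : ℕ} (A : Matrix (Fin (n+1)) (Fin (n+1)) ℕ) :
    A.permanent = ∑ p, A p 0 *
      (Matrix.permanent (A.submatrix (fun i : Fin n => Equiv.swap 0 p i.succ) Fin.succ)) := by
  unfold Matrix.permanent
  rw [Finset.univ_perm_fin_succ, ← Finset.univ_product_univ]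
  simp only [Finset.sum_map, Equiv.toEmbedding_apply, Finset.sum_product]
  refine Finset.sum_congr rfl fun p _ => ?_
  rw [Finset.mul_sum]
  refine Finset.sum_congr rfl fun σ _ => ?_
  rw [Fin.prod_univ_succ]
  simp

/-- vectors of sum two -/
theorem sum_two {n : ℕ} (f : Fin n → ℕ) (h : ∑ i, f i = 2) :
    (∃ a, f a = 2 ∧ ∀ i, i ≠ a → f i = 0) ∨
    (∃ a b, a ≠ b ∧ f a = 1 ∧ f b = 1 ∧ ∀ i, i ≠ a → i ≠ b → f i = 0) := by
  have hne : ∃ a, f a ≠ 0 := by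
    by_contra hc
    push Not at hc
    simp [hc] at h
  obtain ⟨a, ha⟩ := hne
  have h1 := Finset.add_sum_erase Finset.univ f (Finset.mem_univ a)
  rw [h] at h1
  by_cases h2 : f a = 2
  · left
    refine ⟨a, h2, fun i hi => ?_⟩
    have h3 : ∑ x ∈ Finset.univ.erase a, f x = 0 := by omega
    exact (Finset.sum_eq_zero_iff.1 h3) i (by simp [hi])
  · right
    have h3 : ∑ x ∈ Finset.univ.erase a, f x = 1 := by omega
    have hne : ∃ b ∈ Finset.univ.erase a, f b ≠ 0 := by
      by_contra hc
      push Not at hc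
      rw [Finset.sum_eq_zero hc] at h3
      omega
    obtain ⟨b, hb, hb2⟩ := hne
    have h4 := Finset.add_sum_erase _ f hb
    have h5 : ∑ x ∈ (Finset.univ.erase a).erase b, f x = 0 := by omega
    refine ⟨a, b, (Finset.ne_of_mem_erase hb).symm, by omega, by omega, fun i hi hi2 => ?_⟩
    exact (Finset.sum_eq_zero_iff.1 h5) i (by simp [hi, hi2])

theorem sum_one {n : ℕ} (f : Fin n → ℕ) (h : ∑ i, f i = 1) :
    ∃ a, ∀ i, f i = if i = a then 1 else 0 := by
  have hne : ∃ a, f a ≠ 0 := by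
    by_contra hc
    push Not at hc
    simp [hc] at h
  obtain ⟨a, ha⟩ := hne
  have h1 := Finset.add_sum_erase Finset.univ f (Finset.mem_univ a)
  rw [h] at h1
  refine ⟨a, fun i => ?_⟩
  split_ifs with hi
  · subst hi; omega
  · have h3 : ∑ x ∈ Finset.univ.erase a, f x = 0 := by omega
    exact (Finset.sum_eq_zero_iff.1 h3) i (by simp [hi])

/-- moving rows and columns -/
theorem defic_perm {n : ℕ} (A : Matrix (Fin n) (Fin n) ℕ) (i0 j0 : Fin n) (h : Defic A i0 j0)
    (σ τ : Equiv.Perm (Fin n)) :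
    Defic (A.submatrix σ τ) (σ.symm i0) (τ.symm j0) := by
  constructor
  · intro i
    rw [← h.1 (σ i)]
    congr 1
    · exact Equiv.sum_comp τ (fun j => A (σ i) j)
    · simp [Equiv.eq_symm_apply]
  · intro i
    rw [← h.2 (τ i)]
    congr 1
    · exact Equiv.sum_comp σ (fun j => A j (τ i))
    · simp [Equiv.eq_symm_apply]

theorem per_perm {n : ℕ} (A : Matrix (Fin n) (Fin n) ℕ) (σ τ : Equiv.Perm (Fin n)) :
    (A.submatrix σ τ).permanent = A.permanent := by
  rw [← Matrix.permanent_permute_cols σ A,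
    ← Matrix.permanent_permute_rows τ (A.submatrix σ id)]
  rfl

theorem step_a {n : ℕ}
    (hg : ∀ (A : Matrix (Fin (n+1)) (Fin (n+1)) ℕ) i0 j0, Defic A i0 j0 →
      2 * 4 ^ n ≤ 3 ^ n * A.permanent)
    (A : Matrix (Fin (n+2)) (Fin (n+2)) ℕ) (i0) (hA : Defic A i0 0)
    (h0 : A 0 0 = 1) (h1 : A 1 0 = 1) (h2 : ∀ i : Fin n, A i.succ.succ 0 = 0) :
    2 * 4 ^ (n+1) ≤ 3 ^ (n+1) * A.permanent := by
  let B : Matrix (Fin (n+1)) (Fin (n+1)) ℕ := fun i j =>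
    Fin.cases (A 0 j.succ + A 1 j.succ) (fun k => A k.succ.succ j.succ) i
  have hB0 : ∀ j, B 0 j = A 0 j.succ + A 1 j.succ := fun j => rfl
  have hBs : ∀ i j, B (Fin.succ i) j = A i.succ.succ j.succ := fun i j => rfl
  have hper : A.permanent = B.permanent := by
    obtain ⟨m, hm⟩ := row_lin B 0
    rw [perm_col_zero, Fin.sum_univ_succ, Fin.sum_univ_succ]
    simp only [h0, h2, Fin.succ_zero_eq_one, h1]
    rw [hm B (fun _ _ _ => rfl), hm (A.submatrix _ _) ?_, hm (A.submatrix _ _) ?_]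
    · simp [hB0, add_mul, Finset.sum_add_distrib]
      ring
    · intro i j hi
      obtain ⟨k, rfl⟩ := Fin.exists_succ_eq.2 hi
      rw [hBs, Matrix.submatrix_apply, Equiv.swap_apply_of_ne_of_ne (Fin.succ_ne_zero _)]
      rw [← Fin.succ_zero_eq_one]
      exact fun h => hi (Fin.succ_injective _ h)
    · intro i j hi
      obtain ⟨k, rfl⟩ := Fin.exists_succ_eq.2 hi
      rw [hBs]
      simp
  have hcol : ∀ j, ∑ i, B i j + (if j.succ = 0 then 1 else 0) = 3 := by
    intro j
    have := hA.2 j.succ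
    rw [Fin.sum_univ_succ, Fin.sum_univ_succ] at this
    rw [Fin.sum_univ_succ, hB0]
    simp only [hBs]
    simp only [Fin.succ_zero_eq_one] at this
    omega
  simp only [Fin.succ_ne_zero, if_false, add_zero] at hcol
  have hrows : ∀ k : Fin n, ∑ j, B k.succ j + (if k.succ.succ = i0 then 1 else 0) = 3 := by
    intro k
    have := hA.1 k.succ.succ
    rw [Fin.sum_univ_succ, h2] at this
    simp only [hBs]
    omega
  have hrow0 : ∑ j, B 0 j + (if 0 = i0 then 1 else 0) + (if 1 = i0 then 1 else 0) = 4 := by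
    have ha := hA.1 0
    have hb := hA.1 1
    rw [Fin.sum_univ_succ] at ha hb
    simp only [hB0, Finset.sum_add_distrib]
    omega
  rw [hper]
  by_cases hi : i0 = 0 ∨ i0 = 1
  · have hc : Cub B := by
      refine ⟨fun i => ?_, hcol⟩
      refine Fin.cases ?_ (fun k => ?_) i
      · rcases hi with rfl | rfl <;> simp at hrow0 <;> omega
      · have := hrows k
        rw [if_neg] at this
        · simpa using this
        · rcases hi with rfl | rfl
          · exact Fin.succ_ne_zero _
          · rw [← Fin.succ_zero_eq_one]
            exact fun h => Fin.succ_ne_zero _ (Fin.succ_injective _ h)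
    have := cub_of_defic hg B hc
    rw [pow_succ, pow_succ]
    have h44 : 0 < 4 ^ n := by positivity
    nlinarith
  · push Not at hi
    obtain ⟨k, rfl⟩ := Fin.exists_succ_eq.2 hi.1
    have hk : k ≠ 0 := fun h => hi.2 (by simp [h])
    rw [if_neg hi.1.symm, if_neg hi.2.symm] at hrow0
    have := row_avg B 0 3 (2 * 4 ^ n) (3 ^ n) (by omega) (fun j hj => hg _ k j
      ⟨fun i => ?_, fun i => by rw [decAt_col B 0 j hj, hcol]⟩)
    · rw [pow_succ, pow_succ]
      nlinarith
    · have h5 := decAt_row B 0 j hj i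
      revert h5
      refine Fin.cases ?_ (fun l => ?_) i
      · rw [if_neg hk.symm]; simp only [if_true]; omega
      · have := hrows l
        simp only [Fin.succ_inj] at this
        simp only [Fin.succ_ne_zero, if_false]
        omega

theorem step_b {n : ℕ}
    (hg : ∀ (A : Matrix (Fin (n+1)) (Fin (n+1)) ℕ) i0 j0, Defic A i0 j0 →
      2 * 4 ^ n ≤ 3 ^ n * A.permanent)
    (A : Matrix (Fin (n+2)) (Fin (n+2)) ℕ) (i0) (hA : Defic A i0 0)
    (h0 : A 0 0 = 2) (h2 : ∀ i : Fin (n+1), A i.succ 0 = 0) :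
    2 * 4 ^ (n+1) ≤ 3 ^ (n+1) * A.permanent := by
  let B : Matrix (Fin (n+1)) (Fin (n+1)) ℕ := fun i j => A i.succ j.succ
  have hper : A.permanent = 2 * B.permanent := by
    rw [perm_col_zero, Fin.sum_univ_succ]
    have : A.submatrix (fun i : Fin (n+1) => Equiv.swap 0 0 i.succ) Fin.succ = B := by
      ext i j
      simp [B]
    rw [this]
    simp [h0, h2]
  have hrow : ∀ i, ∑ j, B i j + (if i.succ = i0 then 1 else 0) = 3 := by
    intro i
    have := hA.1 i.succ
    rw [Fin.sum_univ_succ, h2] at this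
    simp only [B]
    omega
  have hcol : ∀ j, A 0 j.succ + ∑ i, B i j = 3 := by
    intro j
    have := hA.2 j.succ
    rw [Fin.sum_univ_succ, if_neg (Fin.succ_ne_zero _)] at this
    exact this
  have h00 := hA.1 0
  rw [Fin.sum_univ_succ, h0] at h00
  rw [hper]
  by_cases hi : i0 = 0
  · subst hi
    simp only [if_true] at h00
    have hz : ∑ j : Fin (n+1), A 0 j.succ = 0 := by omega
    have hc : Cub B := by
      refine ⟨fun i => ?_, fun j => ?_⟩
      · simpa [Fin.succ_ne_zero] using hrow i
      · have := hcol j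
        have h7 := (Finset.sum_eq_zero_iff.1 hz) j (Finset.mem_univ _)
        omega
    have := cub_of_defic hg B hc
    rw [pow_succ, pow_succ]
    have h44 : 0 < 4 ^ n := by positivity
    nlinarith
  · obtain ⟨k, rfl⟩ := Fin.exists_succ_eq.2 hi
    rw [if_neg (Ne.symm hi)] at h00
    obtain ⟨a, ha⟩ := sum_one (fun j : Fin (n+1) => A 0 j.succ) (by omega)
    have := hg B k a ⟨fun i => ?_, fun j => ?_⟩
    · rw [pow_succ, pow_succ]
      have h44 : 0 < 4 ^ n := by positivity
      nlinarith
    · have h8 := hrow i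
      rw [← h8]
      by_cases hik : i = k
      · simp [hik]
      · rw [if_neg hik, if_neg (fun hh => hik (Fin.succ_injective _ hh))]
    · have h8 := hcol j
      have h9 : A 0 j.succ = if j = a then 1 else 0 := ha j
      omega

theorem defic_bound (n : ℕ) : ∀ (A : Matrix (Fin (n+1)) (Fin (n+1)) ℕ) i0 j0, Defic A i0 j0 →
      2 * 4 ^ n ≤ 3 ^ n * A.permanent := by
  induction n with
  | zero =>
    intro A i0 j0 h
    have := h.1 0
    have h0 : i0 = 0 := Fin.eq_zero i0
    simp [h0] at this
    simp [this]
  | succ n ih =>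
    intro A i0 j0 h
    have hc := h.2 j0
    simp only [if_true] at hc
    rcases sum_two (fun i => A i j0) (by omega) with ⟨a, ha, ha2⟩ | ⟨a, b, hab, ha, hb, hc⟩
    · have hd := defic_perm A i0 j0 h (Equiv.swap 0 a) (Equiv.swap 0 j0)
      rw [← per_perm A (Equiv.swap 0 a) (Equiv.swap 0 j0)]
      simp only [Equiv.symm_swap, Equiv.swap_apply_right] at hd
      refine step_b ih _ _ hd (by simpa using ha) (fun i => ?_)
      simp only [Matrix.submatrix_apply, Equiv.swap_apply_left]
      apply ha2
      intro hh
      rw [Equiv.swap_apply_eq_iff, Equiv.swap_apply_right] at hh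
      exact Fin.succ_ne_zero _ hh
    · obtain ⟨σ, hs0, hs1⟩ : ∃ σ : Equiv.Perm (Fin (n+2)), σ 0 = a ∧ σ 1 = b := by
        refine ⟨(Equiv.swap 0 a) * (Equiv.swap 1 (Equiv.swap 0 a b)), ?_, ?_⟩
        · rw [Equiv.Perm.mul_apply, Equiv.swap_apply_of_ne_of_ne (a := 1) (x := 0) (by simp) ?_,
            Equiv.swap_apply_left]
          intro hh
          have := (Equiv.swap_apply_eq_iff.1 hh.symm)
          rw [Equiv.swap_apply_left] at this
          exact hab this.symm
        · simp
      have hd := defic_perm A i0 j0 h σ (Equiv.swap 0 j0)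
      rw [← per_perm A σ (Equiv.swap 0 j0)]
      simp only [Equiv.symm_swap, Equiv.swap_apply_right] at hd
      refine step_a ih _ _ hd (by simpa [hs0] using ha) (by simpa [hs1] using hb) (fun i => ?_)
      simp only [Matrix.submatrix_apply, Equiv.swap_apply_left]
      apply hc
      · rw [← hs0]
        exact fun hh => Fin.succ_ne_zero _ (σ.injective hh)
      · rw [← hs1, ← Fin.succ_zero_eq_one]
        exact fun hh => Fin.succ_ne_zero _ (Fin.succ_injective _ (σ.injective hh))

theorem voorhoeve (n : ℕ) (A : Matrix (Fin (n+1)) (Fin (n+1)) ℕ) (hA : Cub A) :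
    3 * 4 ^ n ≤ 3 ^ n * A.permanent :=
  cub_of_defic (defic_bound n) A hA


/-! ### Colourings and partial transversals -/

section Local

variable {n : ℕ}

open scoped Classical in
/-- partial colourings supported on `S` -/
noncomputable def ColS (e : Fin n → Finset (Fin n)) (S : Finset (Fin n)) :
    Finset (Fin n → Fin 3) :=
  Finset.univ.filter (fun c => (∀ i, i ∉ S → c i = 0) ∧
    ∀ v, ∀ i ∈ S, ∀ j ∈ S, v ∈ e i → v ∈ e j → c i = c j → i = j)

open scoped Classical in
/-- partial transversals supported on `S` -/
noncomputable def TrS (e : Fin n → Finset (Fin n)) (S : Finset (Fin n)) :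
    Finset (Fin n → Fin n) :=
  Finset.univ.filter (fun r => (∀ i, i ∉ S → r i = i) ∧ (∀ i ∈ S, r i ∈ e i) ∧
    ∀ i ∈ S, ∀ j ∈ S, r i = r j → i = j)

def ClosedS (e : Fin n → Finset (Fin n)) (S : Finset (Fin n)) : Prop :=
  ∀ i ∈ S, ∀ j, ∀ v, v ∈ e i → v ∈ e j → j ∈ S

def maskS (S : Finset (Fin n)) (c : Fin n → Fin 3) : Fin n → Fin 3 :=
  fun i => if i ∈ S then c i else 0

theorem mask_mem (e : Fin n → Finset (Fin n)) (S T : Finset (Fin n)) (h : S ⊆ T)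
    (c : Fin n → Fin 3) (hc : c ∈ ColS e T) : maskS S c ∈ ColS e S := by
  simp only [ColS, Finset.mem_filter, Finset.mem_univ, true_and] at hc ⊢
  refine ⟨fun i hi => by simp [maskS, hi], fun v i hi j hj h1 h2 h3 => ?_⟩
  simp only [maskS, hi, hj, if_true] at h3
  exact hc.2 v i (h hi) j (h hj) h1 h2 h3

theorem col_union (e : Fin n → Finset (Fin n)) (S T : Finset (Fin n)) :
    (ColS e (T ∪ S)).card ≤ (ColS e T).card * (ColS e S).card := by
  rw [← Finset.card_product]
  refine Finset.card_le_card_of_injOn (fun c => (maskS T c, maskS S c)) ?_ ?_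
  · intro c hc
    simp only [Finset.coe_product, Set.mem_prod, Finset.mem_coe] at hc ⊢
    exact ⟨mask_mem e _ _ Finset.subset_union_left c hc,
      mask_mem e _ _ Finset.subset_union_right c hc⟩
  · intro c hc d hd h
    simp only [ColS, Finset.coe_filter, Finset.mem_univ, true_and, Set.mem_ofPred_eq] at hc hd
    simp only [Prod.mk.injEq] at h
    funext i
    have h1 := congrFun h.1 i
    have h2 := congrFun h.2 i
    simp only [maskS] at h1 h2
    by_cases hT : i ∈ T
    · simpa [hT] using h1
    · by_cases hS : i ∈ S
      · simpa [hS] using h2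
      · rw [hc.1 i (by simp [hT, hS]), hd.1 i (by simp [hT, hS])]

theorem col_single (e : Fin n → Finset (Fin n)) (a : Fin n) : (ColS e {a}).card ≤ 3 := by
  have : (ColS e {a}).card ≤ (Finset.univ : Finset (Fin 3)).card := by
    refine Finset.card_le_card_of_injOn (fun c => c a) (by simp) ?_
    intro c hc d hd h
    simp only [ColS, Finset.coe_filter, Finset.mem_univ, true_and, Set.mem_ofPred_eq] at hc hd
    funext i
    by_cases hi : i = a
    · subst hi; exact h
    · rw [hc.1 i (by simp [hi]), hd.1 i (by simp [hi])]
  simpa using this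

theorem col_step_one (e : Fin n → Finset (Fin n)) (S : Finset (Fin n)) (v a b d : Fin n)
    (ha : a ∈ S) (hb : b ∈ S) (hd : d ∉ S) (hab : a ≠ b)
    (hva : v ∈ e a) (hvb : v ∈ e b) (hvd : v ∈ e d) :
    (ColS e (insert d S)).card ≤ (ColS e S).card := by
  refine Finset.card_le_card_of_injOn (maskS S) ?_ ?_
  · intro c hc
    exact mask_mem e _ _ (Finset.subset_insert _ _) c hc
  · intro c hc c' hc' h
    simp only [ColS, Finset.coe_filter, Finset.mem_univ, true_and, Set.mem_ofPred_eq] at hc hc'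
    have hS : ∀ i ∈ S, c i = c' i := fun i hi => by
      have := congrFun h i
      simpa [maskS, hi] using this
    have hda : d ≠ a := fun h => hd (h ▸ ha)
    have hdb : d ≠ b := fun h => hd (h ▸ hb)
    have key : ∀ x y z z' : Fin 3, x ≠ y → z ≠ x → z ≠ y → z' ≠ x → z' ≠ y → z = z' := by decide
    funext i
    by_cases hi : i ∈ S
    · exact hS i hi
    · by_cases hid : i = d
      · subst hid
        have mS : ∀ x ∈ S, x ∈ insert i S := fun x hx => Finset.mem_insert_of_mem hx
        have mi : i ∈ insert i S := Finset.mem_insert_self _ _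
        apply key (c a) (c b)
        · exact fun h => hab (hc.2 v a (mS a ha) b (mS b hb) hva hvb h)
        · exact fun h => hda (hc.2 v i mi a (mS a ha) hvd hva h)
        · exact fun h => hdb (hc.2 v i mi b (mS b hb) hvd hvb h)
        · rw [hS a ha]; exact fun h => hda (hc'.2 v i mi a (mS a ha) hvd hva h)
        · rw [hS b hb]; exact fun h => hdb (hc'.2 v i mi b (mS b hb) hvd hvb h)
      · rw [hc.1 i (by simp [hi, hid]), hc'.1 i (by simp [hi, hid])]

theorem col_step_two (e : Fin n → Finset (Fin n)) (S : Finset (Fin n)) (v a b d : Fin n)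
    (ha : a ∈ S) (hb : b ∉ S) (hd : d ∉ S) (hbd : b ≠ d)
    (hva : v ∈ e a) (hvb : v ∈ e b) (hvd : v ∈ e d) :
    (ColS e (insert b (insert d S))).card ≤ (ColS e S).card * 2 := by
  have h2 : (Finset.univ : Finset Bool).card = 2 := rfl
  rw [← h2, ← Finset.card_product]
  refine Finset.card_le_card_of_injOn (fun c => (maskS S c, decide (c b = c a + 1))) ?_ ?_
  · intro c hc
    simp only [Finset.coe_product, Set.mem_prod, Finset.mem_coe, Finset.mem_univ, and_true]
    exact mask_mem e _ _ ((Finset.subset_insert _ _).trans (Finset.subset_insert _ _)) c hc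
  · intro c hc c' hc' h
    simp only [ColS, Finset.coe_filter, Finset.mem_univ, true_and, Set.mem_ofPred_eq] at hc hc'
    simp only [Prod.mk.injEq] at h
    have hS : ∀ i ∈ S, c i = c' i := fun i hi => by
      have := congrFun h.1 i
      simpa [maskS, hi] using this
    have hda : d ≠ a := fun h => hd (h ▸ ha)
    have hba : b ≠ a := fun h => hb (h ▸ ha)
    have key : ∀ x y z y' z' : Fin 3, y ≠ x → z ≠ x → y ≠ z → y' ≠ x → z' ≠ x → y' ≠ z' →
      decide (y = x + 1) = decide (y' = x + 1) → y = y' ∧ z = z' := by decide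
    have ma : a ∈ insert b (insert d S) := by simp [ha]
    have mb : b ∈ insert b (insert d S) := by simp
    have md : d ∈ insert b (insert d S) := by simp
    have hk := key (c a) (c b) (c d) (c' b) (c' d)
      (fun h => hba (hc.2 v b mb a ma hvb hva h))
      (fun h => hda (hc.2 v d md a ma hvd hva h))
      (fun h => hbd (hc.2 v b mb d md hvb hvd h))
      (by rw [hS a ha]; exact (fun h => hba (hc'.2 v b mb a ma hvb hva h)))
      (by rw [hS a ha]; exact (fun h => hda (hc'.2 v d md a ma hvd hva h)))
      (fun h => hbd (hc'.2 v b mb d md hvb hvd h))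
      (by rw [h.2, hS a ha])
    funext i
    by_cases hi : i ∈ S
    · exact hS i hi
    · by_cases hib : i = b
      · rw [hib]; exact hk.1
      · by_cases hid : i = d
        · rw [hid]; exact hk.2
        · rw [hc.1 i (by simp [hi, hid, hib]), hc'.1 i (by simp [hi, hid, hib])]

theorem tr_union (e : Fin n → Finset (Fin n)) (S T : Finset (Fin n)) (hd : Disjoint T S)
    (hT : ClosedS e T) :
    (TrS e T).card * (TrS e S).card ≤ (TrS e (T ∪ S)).card := by
  rw [← Finset.card_product]
  refine Finset.card_le_card_of_injOn (fun p => fun i => if i ∈ T then p.1 i else p.2 i) ?_ ?_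
  · rintro ⟨r, s⟩ hp
    simp only [TrS, Finset.coe_product, Set.mem_prod, Finset.coe_filter, Finset.mem_univ, true_and,
      Set.mem_ofPred_eq] at hp ⊢
    obtain ⟨⟨hr1, hr2, hr3⟩, hs1, hs2, hs3⟩ := hp
    have hcross : ∀ i ∈ T, ∀ j ∈ S, r i ≠ s j := by
      intro i hi j hj h
      have : j ∈ T := hT i hi j (r i) (hr2 i hi) (h ▸ hs2 j hj)
      exact Finset.disjoint_left.1 hd this hj
    refine ⟨fun i hi => ?_, fun i hi => ?_, fun i hi j hj h => ?_⟩
    · simp only [Finset.mem_union, not_or] at hi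
      simp [hi.1, hs1 i hi.2]
    · by_cases hiT : i ∈ T
      · simpa [hiT] using hr2 i hiT
      · simpa [hiT] using hs2 i (by simpa [hiT] using hi)
    · by_cases hiT : i ∈ T <;> by_cases hjT : j ∈ T <;> simp only [hiT, hjT, if_true, if_false] at h
      · exact hr3 i hiT j hjT h
      · exact (hcross i hiT j (by simpa [hjT] using hj) h).elim
      · exact (hcross j hjT i (by simpa [hiT] using hi) h.symm).elim
      · exact hs3 i (by simpa [hiT] using hi) j (by simpa [hjT] using hj) h
  · rintro ⟨r, s⟩ hp ⟨r', s'⟩ hp' h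
    simp only [TrS, Finset.coe_product, Set.mem_prod, Finset.coe_filter, Finset.mem_univ, true_and,
      Set.mem_ofPred_eq] at hp hp'
    have h' := fun i => congrFun h i
    simp only at h'
    refine Prod.ext ?_ ?_
    · funext i
      by_cases hi : i ∈ T
      · simpa [hi] using h' i
      · exact (hp.1.1 i hi).trans (hp'.1.1 i hi).symm
    · funext i
      by_cases hi : i ∈ S
      · have : i ∉ T := fun h => Finset.disjoint_left.1 hd h hi
        simpa [this] using h' i
      · exact (hp.2.1 i hi).trans (hp'.2.1 i hi).symm

theorem closed_card (e : Fin n → Finset (Fin n)) (he : ∀ i, (e i).card = 3)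
    (hv : ∀ v, (Finset.univ.filter (fun i => v ∈ e i)).card = 3)
    (S : Finset (Fin n)) (hS : ClosedS e S) : (S.biUnion e).card = S.card := by
  have h := Finset.sum_card_bipartiteAbove_eq_sum_card_bipartiteBelow (s := S)
    (t := S.biUnion e) (fun i v => v ∈ e i)
  have h1 : ∑ i ∈ S, ((S.biUnion e).bipartiteAbove (fun i v => v ∈ e i) i).card = ∑ i ∈ S, 3 := by
    refine Finset.sum_congr rfl fun i hi => ?_
    rw [← he i]
    congr 1
    ext v
    simp only [Finset.bipartiteAbove, Finset.mem_filter, Finset.mem_biUnion]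
    exact ⟨fun h => h.2, fun h => ⟨⟨i, hi, h⟩, h⟩⟩
  have h2 : ∑ v ∈ S.biUnion e, (S.bipartiteBelow (fun i v => v ∈ e i) v).card
      = ∑ v ∈ S.biUnion e, 3 := by
    refine Finset.sum_congr rfl fun v hv' => ?_
    rw [← hv v]
    congr 1
    ext j
    simp only [Finset.mem_biUnion] at hv'
    obtain ⟨i, hi, hvi⟩ := hv'
    simp only [Finset.bipartiteBelow, Finset.mem_filter, Finset.mem_univ, true_and]
    exact ⟨fun h => h.2, fun h => ⟨hS i hi j v hvi h, h⟩⟩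
  rw [h1, h2] at h
  simp at h
  omega

theorem closed_tr (e : Fin n → Finset (Fin n)) (he : ∀ i, (e i).card = 3)
    (hv : ∀ v, (Finset.univ.filter (fun i => v ∈ e i)).card = 3)
    (S : Finset (Fin n)) (hS : ClosedS e S) (m : ℕ) (hm : S.card = m + 1) :
    3 * 4 ^ m ≤ 3 ^ m * (TrS e S).card := by
  have hc := closed_card e he hv S hS
  let a : Fin (m+1) ≃ S := (S.equivFinOfCardEq hm).symm
  let b : Fin (m+1) ≃ (S.biUnion e) := ((S.biUnion e).equivFinOfCardEq (hc.trans hm)).symm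
  let A : Matrix (Fin (m+1)) (Fin (m+1)) ℕ := fun i j =>
    if (b i : Fin n) ∈ e (a j) then 1 else 0
  have hA : Cub A := by
    constructor
    · intro i
      have h1 : ∑ j, A i j = ∑ s : S, if (b i : Fin n) ∈ e s then 1 else 0 :=
        Equiv.sum_comp a (fun s : S => if (b i : Fin n) ∈ e s then 1 else 0)
      rw [h1, Finset.sum_coe_sort S (fun s => if (b i : Fin n) ∈ e s then 1 else 0),
        ← Finset.card_filter, ← hv (b i)]
      congr 1
      ext j
      obtain ⟨k, hk, hvk⟩ := Finset.mem_biUnion.1 (b i).2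
      simp only [Finset.mem_filter, Finset.mem_univ, true_and]
      exact ⟨fun h => h.2, fun h => ⟨hS k hk j _ hvk h, h⟩⟩
    · intro j
      have h1 : ∑ i, A i j = ∑ v : S.biUnion e, if (v : Fin n) ∈ e (a j) then 1 else 0 :=
        Equiv.sum_comp b (fun v : S.biUnion e => if (v : Fin n) ∈ e (a j) then 1 else 0)
      rw [h1, Finset.sum_coe_sort (S.biUnion e) (fun v => if v ∈ e (a j) then 1 else 0),
        ← Finset.card_filter, ← he (a j)]
      congr 1
      ext v
      simp only [Finset.mem_filter, Finset.mem_biUnion]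
      exact ⟨fun h => h.2, fun h => ⟨⟨_, (a j).2, h⟩, h⟩⟩
  refine (voorhoeve m A hA).trans (Nat.mul_le_mul_left _ ?_)
  have hp : A.permanent = (Finset.univ.filter (fun σ : Equiv.Perm (Fin (m+1)) =>
      ∀ i, (b (σ i) : Fin n) ∈ e (a i))).card := by
    rw [Finset.card_filter]
    unfold Matrix.permanent
    refine Finset.sum_congr rfl fun σ _ => ?_
    simp only [A]
    rw [Finset.prod_ite_zero]
    simp
  rw [hp]
  refine Finset.card_le_card_of_injOn
    (fun σ i => if h : i ∈ S then (b (σ (a.symm ⟨i, h⟩)) : Fin n) else i) ?_ ?_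
  · intro σ hσ
    simp only [TrS, Finset.coe_filter, Finset.mem_univ, true_and,
      Set.mem_ofPred_eq] at hσ ⊢
    refine ⟨fun i hi => by simp [hi], fun i hi => ?_, fun i hi j hj h => ?_⟩
    · have := hσ (a.symm ⟨i, hi⟩)
      simpa [hi] using this
    · simp only [hi, hj, dif_pos] at h
      have := a.symm.injective (σ.injective (b.injective (Subtype.ext h)))
      simpa using this
  · intro σ _ τ _ h
    ext1 i
    have := congrFun h (a i)
    simp only [(a i).2, dif_pos, Subtype.coe_eta, Equiv.symm_apply_apply] at this
    exact b.injective (Subtype.ext this)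

theorem greedy (e : Fin n → Finset (Fin n))
    (hv : ∀ v, (Finset.univ.filter (fun i => v ∈ e i)).card = 3)
    (T : Finset (Fin n)) (hT : ClosedS e T) (a0 : Fin n) (ha0 : a0 ∉ T) :
    ∃ S : Finset (Fin n), S.Nonempty ∧ Disjoint T S ∧ ClosedS e S ∧
      (ColS e S).card ^ 2 * 2 ≤ 9 * 2 ^ S.card := by
  classical
  let F : Finset (Finset (Fin n)) := Finset.univ.filter (fun S => S.Nonempty ∧ Disjoint T S ∧
    (ColS e S).card ^ 2 * 2 ≤ 9 * 2 ^ S.card)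
  have hF : F.Nonempty := by
    refine ⟨{a0}, ?_⟩
    simp only [F, Finset.mem_filter, Finset.mem_univ, true_and]
    refine ⟨by simp, by simpa using ha0, ?_⟩
    have := col_single e a0
    simp only [Finset.card_singleton]
    nlinarith
  obtain ⟨S, hSF, hmax⟩ := F.exists_max_image Finset.card hF
  simp only [F, Finset.mem_filter, Finset.mem_univ, true_and] at hSF hmax
  obtain ⟨hne, hdis, hcard⟩ := hSF
  refine ⟨S, hne, hdis, ?_, hcard⟩
  intro a ha d v hva hvd
  by_contra hd
  have hTn : ∀ x, v ∈ e x → x ∉ T := fun x hx hxT =>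
    Finset.disjoint_left.1 hdis (hT x hxT a v hx hva) ha
  have had : a ≠ d := fun h => hd (h ▸ ha)
  -- the third hyperedge at v
  obtain ⟨b, hb⟩ : ∃ b, b ∈ ((Finset.univ.filter (fun i => v ∈ e i)).erase a).erase d := by
    apply Finset.card_pos.1
    rw [Finset.card_erase_of_mem, Finset.card_erase_of_mem, hv]
    · norm_num
    · simpa using hva
    · simp [had.symm, hvd]
  simp only [Finset.mem_erase, Finset.mem_filter, Finset.mem_univ, true_and] at hb
  obtain ⟨hbd, hba, hvb⟩ := hb
  by_cases hbS : b ∈ S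
  · have h1 := col_step_one e S v a b d ha hbS hd hba.symm hva hvb hvd
    have h2 := hmax (insert d S) ⟨by simp, by
      rw [Finset.disjoint_insert_right]; exact ⟨hTn d hvd, hdis⟩, by
      rw [Finset.card_insert_of_notMem hd, pow_succ 2 S.card]
      have := Nat.pow_le_pow_left h1 2
      nlinarith⟩
    rw [Finset.card_insert_of_notMem hd] at h2
    omega
  · have h1 := col_step_two e S v a b d ha hbS hd hbd hva hvb hvd
    have hc : (insert b (insert d S)).card = S.card + 2 := by
      rw [Finset.card_insert_of_notMem (by simp [hbd, hbS]), Finset.card_insert_of_notMem hd]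
    have h2 := hmax (insert b (insert d S)) ⟨by simp, by
      rw [Finset.disjoint_insert_right, Finset.disjoint_insert_right]
      exact ⟨hTn b hvb, hTn d hvd, hdis⟩, by
      rw [hc, pow_add]
      have := Nat.pow_le_pow_left h1 2
      rw [mul_pow] at this
      nlinarith⟩
    rw [hc] at h2
    omega

theorem col_le_tr (e : Fin n → Finset (Fin n)) (he : ∀ i, (e i).card = 3)
    (hv : ∀ v, (Finset.univ.filter (fun i => v ∈ e i)).card = 3) :
    (ColS e Finset.univ).card ^ 2 * 8 ^ n ≤ 9 ^ n * (TrS e Finset.univ).card ^ 2 := by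
  classical
  let F : Finset (Finset (Fin n)) := Finset.univ.filter (fun S => ClosedS e S ∧
    (ColS e S).card ^ 2 * 8 ^ S.card ≤ 9 ^ S.card * (TrS e S).card ^ 2)
  have hF : F.Nonempty := by
    refine ⟨∅, ?_⟩
    simp only [F, Finset.mem_filter, Finset.mem_univ, true_and]
    refine ⟨by simp [ClosedS], ?_⟩
    have h1 : (ColS e ∅).card ≤ 1 := by
      rw [Finset.card_le_one]
      intro c hc d hd
      simp only [ColS, Finset.mem_filter, Finset.mem_univ, true_and] at hc hd
      funext i
      rw [hc.1 i (by simp), hd.1 i (by simp)]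
    have h2 : 0 < (TrS e ∅).card := by
      apply Finset.card_pos.2
      refine ⟨fun i => i, ?_⟩
      simp [TrS]
    simp
    nlinarith
  obtain ⟨T, hTF, hmax⟩ := F.exists_max_image Finset.card hF
  simp only [F, Finset.mem_filter, Finset.mem_univ, true_and] at hTF hmax
  obtain ⟨hTc, hTb⟩ := hTF
  by_cases hTu : T = Finset.univ
  · subst hTu
    simpa using hTb
  · exfalso
    obtain ⟨a0, ha0⟩ : ∃ a, a ∉ T := by
      by_contra hc
      push Not at hc
      exact hTu (Finset.eq_univ_iff_forall.2 hc)
    obtain ⟨S, hne, hdis, hSc, hSb⟩ := greedy e hv T hTc a0 ha0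
    obtain ⟨m, hm⟩ := Nat.exists_eq_succ_of_ne_zero (Finset.card_ne_zero.2 hne)
    have htr := closed_tr e he hv S hSc m hm
    have hSS : (ColS e S).card ^ 2 * 8 ^ S.card ≤ 9 ^ S.card * (TrS e S).card ^ 2 := by
      have h1 := Nat.pow_le_pow_left htr 2
      rw [hm] at hSb ⊢
      have e9 : (9:ℕ) ^ m = (3 ^ m) ^ 2 := by rw [← pow_mul, mul_comm, pow_mul]; norm_num
      have e16 : ((4:ℕ) ^ m) ^ 2 = 2 ^ m * 8 ^ m := by
        rw [← pow_mul, mul_comm, pow_mul, ← mul_pow]; norm_num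
      calc (ColS e S).card ^ 2 * 8 ^ (m+1)
          = ((ColS e S).card ^ 2 * 2) * (4 * 8 ^ m) := by ring
        _ ≤ (9 * 2 ^ (m+1)) * (4 * 8 ^ m) := Nat.mul_le_mul_right _ hSb
        _ = 72 * (2 ^ m * 8 ^ m) := by ring
        _ ≤ 9 * (3 * 4 ^ m) ^ 2 := by rw [mul_pow, e16]; nlinarith
        _ ≤ 9 * (3 ^ m * (TrS e S).card) ^ 2 := Nat.mul_le_mul_left _ h1
        _ = 9 ^ (m+1) * (TrS e S).card ^ 2 := by rw [pow_succ 9 m, e9]; ring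
    have hcl : ClosedS e (T ∪ S) := by
      intro i hi j v h1 h2
      rcases Finset.mem_union.1 hi with h | h
      · exact Finset.mem_union_left _ (hTc i h j v h1 h2)
      · exact Finset.mem_union_right _ (hSc i h j v h1 h2)
    have hcard := Finset.card_union_of_disjoint hdis
    have := hmax (T ∪ S) ⟨hcl, by
      rw [hcard, pow_add, pow_add]
      calc _ ≤ ((ColS e T).card * (ColS e S).card) ^ 2 * (8 ^ T.card * 8 ^ S.card) :=
            Nat.mul_le_mul_right _ (Nat.pow_le_pow_left (col_union e S T) 2)
        _ = ((ColS e T).card ^ 2 * 8 ^ T.card) * ((ColS e S).card ^ 2 * 8 ^ S.card) := by ring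
        _ ≤ (9 ^ T.card * (TrS e T).card ^ 2) * (9 ^ S.card * (TrS e S).card ^ 2) :=
            Nat.mul_le_mul hTb hSS
        _ = (9 ^ T.card * 9 ^ S.card) * ((TrS e T).card * (TrS e S).card) ^ 2 := by ring
        _ ≤ _ := Nat.mul_le_mul_left _ (Nat.pow_le_pow_left (tr_union e S T hdis hTc) 2)⟩
    have := Finset.card_pos.2 hne
    omega

theorem hall_reg (e : Fin n → Finset (Fin n)) (r : ℕ) (hr : 0 < r) (he : ∀ i, (e i).card = r)
    (hv : ∀ v, (Finset.univ.filter (fun i => v ∈ e i)).card = r) :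
    ∃ ρ : Equiv.Perm (Fin n), ∀ i, ρ i ∈ e i := by
  have := (Finset.all_card_le_biUnion_card_iff_exists_injective e).1 (by
    intro S
    have h := Finset.sum_card_bipartiteAbove_eq_sum_card_bipartiteBelow (s := S)
      (t := S.biUnion e) (fun i v => v ∈ e i)
    have h1 : ∑ i ∈ S, ((S.biUnion e).bipartiteAbove (fun i v => v ∈ e i) i).card
        = ∑ i ∈ S, r := by
      refine Finset.sum_congr rfl fun i hi => ?_
      rw [← he i]
      congr 1
      ext v
      simp only [Finset.bipartiteAbove, Finset.mem_filter, Finset.mem_biUnion]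
      exact ⟨fun h => h.2, fun h => ⟨⟨i, hi, h⟩, h⟩⟩
    have h2 : ∑ v ∈ S.biUnion e, (S.bipartiteBelow (fun i v => v ∈ e i) v).card
        ≤ ∑ v ∈ S.biUnion e, r := by
      refine Finset.sum_le_sum fun v hv' => ?_
      rw [← hv v]
      apply Finset.card_le_card
      intro j
      simp [Finset.bipartiteBelow]
    rw [← h, h1] at h2
    simp only [Finset.sum_const, smul_eq_mul] at h2
    exact Nat.le_of_mul_le_mul_right h2 hr)
  obtain ⟨f, hf, hfe⟩ := this
  exact ⟨Equiv.ofBijective f (Finite.injective_iff_bijective.1 hf), hfe⟩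

theorem erase_reg (e : Fin n → Finset (Fin n)) (r : ℕ) (he : ∀ i, (e i).card = r + 1)
    (hv : ∀ v, (Finset.univ.filter (fun i => v ∈ e i)).card = r + 1)
    (ρ : Equiv.Perm (Fin n)) (hρ : ∀ i, ρ i ∈ e i) :
    (∀ i, ((e i).erase (ρ i)).card = r) ∧
    (∀ v, (Finset.univ.filter (fun i => v ∈ (e i).erase (ρ i))).card = r) := by
  refine ⟨fun i => by rw [Finset.card_erase_of_mem (hρ i), he]; rfl, fun v => ?_⟩
  have : Finset.univ.filter (fun i => v ∈ (e i).erase (ρ i))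
      = (Finset.univ.filter (fun i => v ∈ e i)).erase (ρ.symm v) := by
    ext i
    simp only [Finset.mem_filter, Finset.mem_univ, true_and, Finset.mem_erase]
    rw [ne_eq, ne_eq, Equiv.eq_symm_apply, eq_comm]
  rw [this, Finset.card_erase_of_mem, hv]
  · rfl
  · have := hρ (ρ.symm v)
    simpa using this

open scoped Classical in
/-- proper colourings of the incidence graph -/
noncomputable def EC (e : Fin n → Finset (Fin n)) : Finset (Fin 3 → Equiv.Perm (Fin n)) :=
  Finset.univ.filter (fun ρ => ∀ i, Function.Injective (fun k => ρ k i) ∧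
    Finset.image (fun k => ρ k i) Finset.univ = e i)

theorem tr_le_ec (e : Fin n → Finset (Fin n)) (he : ∀ i, (e i).card = 3)
    (hv : ∀ v, (Finset.univ.filter (fun i => v ∈ e i)).card = 3) :
    (TrS e Finset.univ).card ≤ (EC e).card := by
  refine Finset.card_le_card_of_surjOn (fun ρ i => ρ 0 i) ?_
  intro r hr
  simp only [TrS, Finset.coe_filter, Finset.mem_univ, true_and,
      Set.mem_ofPred_eq] at hr
  obtain ⟨-, hr1, hr2⟩ := hr
  let ρ0 : Equiv.Perm (Fin n) := Equiv.ofBijective r (Finite.injective_iff_bijective.1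
    (fun i j h => hr2 i trivial j trivial h))
  have h0 : ∀ i, ρ0 i ∈ e i := fun i => hr1 i trivial
  obtain ⟨he1, hv1⟩ := erase_reg e 2 he hv ρ0 h0
  obtain ⟨ρ1, h1⟩ := hall_reg _ 2 (by norm_num) he1 hv1
  obtain ⟨he2, hv2⟩ := erase_reg _ 1 he1 hv1 ρ1 h1
  obtain ⟨ρ2, h2⟩ := hall_reg _ 1 (by norm_num) he2 hv2
  refine ⟨![ρ0, ρ1, ρ2], ?_, ?_⟩
  · simp only [EC, Finset.coe_filter, Finset.mem_univ, true_and, Set.mem_ofPred_eq]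
    intro i
    have a1 := h1 i
    have a2 := h2 i
    simp only [Finset.mem_erase] at a1 a2
    have hinj : Function.Injective (fun k => (![ρ0, ρ1, ρ2] : Fin 3 → Equiv.Perm (Fin n)) k i) := by
      intro k l h
      fin_cases k <;> fin_cases l <;> simp at h ⊢
      · exact a1.1 h.symm
      · exact a2.2.1 h.symm
      · exact a1.1 h
      · exact a2.1 h.symm
      · exact a2.2.1 h
      · exact a2.1 h
    refine ⟨hinj, ?_⟩
    apply Finset.eq_of_subset_of_card_le
    · intro v hv
      simp only [Finset.mem_image, Finset.mem_univ, true_and] at hv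
      obtain ⟨k, rfl⟩ := hv
      fin_cases k
      · exact h0 i
      · exact a1.2
      · exact a2.2.2
    · rw [Finset.card_image_of_injective _ hinj, he]
      simp
  · rfl

open scoped Classical in
/-- colourings of the hyperedges into 1-factors -/
noncomputable def VC (e : Fin n → Finset (Fin n)) : Finset (Fin n → Fin 3) :=
  Finset.univ.filter (fun c => ∀ v k, ∃! i, c i = k ∧ v ∈ e i)

theorem vc_le_ec (e : Fin n → Finset (Fin n)) (he : ∀ i, (e i).card = 3) :
    (VC e).card ^ 2 * 8 ^ n ≤ 9 ^ n * (EC e).card ^ 2 := by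
  rcases (VC e).eq_empty_or_nonempty with h | ⟨c, hc⟩
  · simp [h]
  · have hv : ∀ v, (Finset.univ.filter (fun i => v ∈ e i)).card = 3 := by
      intro v
      simp only [VC, Finset.mem_filter, Finset.mem_univ, true_and] at hc
      rw [Finset.card_eq_sum_card_fiberwise (f := c) (t := Finset.univ) (by simp)]
      have : ∀ k, ((Finset.univ.filter (fun i => v ∈ e i)).filter (fun i => c i = k)).card = 1 := by
        intro k
        rw [Finset.card_eq_one]
        obtain ⟨i, hi, hu⟩ := hc v k
        refine ⟨i, ?_⟩
        ext j
        simp only [Finset.mem_filter, Finset.mem_univ, true_and, Finset.mem_singleton]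
        exact ⟨fun h => hu j ⟨h.2, h.1⟩, fun h => by rw [h]; exact ⟨hi.2, hi.1⟩⟩
      simp [this]
    have h1 : (VC e).card ≤ (ColS e Finset.univ).card := by
      apply Finset.card_le_card
      intro c hc
      simp only [VC, ColS, Finset.mem_filter, Finset.mem_univ, true_and] at hc ⊢
      refine ⟨fun i hi => (hi trivial).elim, fun v i _ j _ h1 h2 h3 => ?_⟩
      exact (hc v (c i)).unique ⟨rfl, h1⟩ ⟨h3.symm, h2⟩
    calc _ ≤ (ColS e Finset.univ).card ^ 2 * 8 ^ n :=
          Nat.mul_le_mul_right _ (Nat.pow_le_pow_left h1 2)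
      _ ≤ _ := col_le_tr e he hv
      _ ≤ _ := Nat.mul_le_mul_left _ (Nat.pow_le_pow_left (tr_le_ec e he hv) 2)

theorem ec_total (W : Finset (Finset (Fin n))) :
    ∑ e ∈ Fintype.piFinset (fun _ : Fin n => W), (EC e).card ≤
      n.factorial * mper (adjMatrix n 3 W) := by
  classical
  have hper : mper (adjMatrix n 3 W) = (Finset.univ.filter (fun σ : Fin 3 → Equiv.Perm (Fin n) =>
      σ 0 = Equiv.refl (Fin n) ∧ ∀ i, Function.Injective (fun k => σ k i) ∧
        Finset.image (fun k => σ k i) Finset.univ ∈ W)).card := by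
    unfold mper adjMatrix
    simp only [Finset.prod_ite_zero, Finset.prod_const_one]
    rw [← Finset.sum_filter, ← Finset.card_eq_sum_ones, Finset.filter_filter]
    congr 1
    ext σ
    simp
  rw [← Finset.card_sigma, hper]
  have hf : n.factorial = (Finset.univ : Finset (Equiv.Perm (Fin n))).card := by
    rw [Finset.card_univ, Fintype.card_perm, Fintype.card_fin]
  rw [hf, ← Finset.card_product]
  refine Finset.card_le_card_of_injOn
    (fun x => (x.2 0, fun k => (x.2 0).symm.trans (x.2 k))) ?_ ?_
  · rintro ⟨e, ρ⟩ hx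
    simp only [Finset.mem_coe, Finset.mem_sigma, Fintype.mem_piFinset, EC, Finset.mem_filter,
      Finset.mem_univ, true_and, Finset.mem_product] at hx ⊢
    refine ⟨by ext; simp, fun i => ?_⟩
    have h1 := hx.2 ((ρ 0).symm i)
    refine ⟨h1.1, ?_⟩
    have h2 := hx.1 ((ρ 0).symm i)
    rw [← h1.2] at h2
    exact h2
  · rintro ⟨e, ρ⟩ hx ⟨e', ρ'⟩ hx' h
    simp only [Finset.mem_coe, Finset.mem_sigma, Fintype.mem_piFinset, EC, Finset.mem_filter,
      Finset.mem_univ, true_and] at hx hx'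
    simp only [Prod.mk.injEq] at h
    have hρ : ρ = ρ' := by
      funext k
      have h2 := congrFun h.2 k
      simp only [h.1] at h2
      ext i
      have h3 := congrArg (fun f => f (ρ' 0 i)) h2
      simp only [Equiv.trans_apply, Equiv.symm_apply_apply] at h3
      rw [h3]
    subst hρ
    have : e = e' := by
      funext i
      rw [← (hx.2 i).2, ← (hx'.2 i).2]
    rw [this]

theorem factor_card_s9 (W P : Finset (Finset (Fin n))) (huniform : ∀ e ∈ W, e.card = 3)
    (hP : IsOneFactor W P) : 3 * P.card = n := by
  have h := Finset.sum_card_bipartiteAbove_eq_sum_card_bipartiteBelow (s := P)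
      (t := (Finset.univ : Finset (Fin n))) (fun e v => v ∈ e)
  have h1 : ∑ e ∈ P, ((Finset.univ : Finset (Fin n)).bipartiteAbove (fun e v => v ∈ e) e).card
      = ∑ e ∈ P, 3 := by
    refine Finset.sum_congr rfl fun e he => ?_
    rw [← huniform e (hP.1 he)]
    congr 1
    ext v
    simp [Finset.bipartiteAbove]
  have h2 : ∑ v : Fin n, (P.bipartiteBelow (fun e v => v ∈ e) v).card = ∑ v : Fin n, 1 := by
    refine Finset.sum_congr rfl fun v _ => ?_
    rw [Finset.card_eq_one]
    obtain ⟨e, he, hu⟩ := hP.2 v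
    refine ⟨e, ?_⟩
    ext f
    simp only [Finset.bipartiteBelow, Finset.mem_filter, Finset.mem_singleton]
    exact ⟨fun h => hu f h, fun h => by rw [h]; exact he⟩
  rw [h1, h2] at h
  simp at h
  omega

theorem vc_total (W : Finset (Finset (Fin n))) (huniform : ∀ e ∈ W, e.card = 3) :
    n.factorial * numOneFactors W ^ 3 ≤
      ∑ e ∈ Fintype.piFinset (fun _ : Fin n => W), (VC e).card := by
  classical
  rw [← Finset.card_sigma]
  let Q := {P : Finset (Finset (Fin n)) // IsOneFactor W P}
  have hQ : numOneFactors W = Fintype.card Q := by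
    unfold numOneFactors
    rw [← Nat.card_coe_set_eq, Nat.card_eq_fintype_card]
    rfl
  have hE : ∀ p : Fin 3 → Q, Fintype.card (Fin n ≃ Σ k, ((p k).1 : Finset (Finset (Fin n))))
      = n.factorial := by
    intro p
    have hc : Fintype.card (Σ k, ((p k).1 : Finset (Finset (Fin n)))) = n := by
      rw [Fintype.card_sigma, Fin.sum_univ_three]
      simp only [Fintype.card_coe]
      have h0 := factor_card_s9 W _ huniform (p 0).2
      have h1 := factor_card_s9 W _ huniform (p 1).2
      have h2 := factor_card_s9 W _ huniform (p 2).2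
      omega
    have b : Fin n ≃ Σ k, ((p k).1 : Finset (Finset (Fin n))) :=
      Fintype.equivOfCardEq (by rw [hc, Fintype.card_fin])
    rw [Fintype.card_equiv b, Fintype.card_fin]
  have hL : n.factorial * numOneFactors W ^ 3 =
      Fintype.card (Σ p : Fin 3 → Q, (Fin n ≃ Σ k, ((p k).1 : Finset (Finset (Fin n))))) := by
    rw [Fintype.card_sigma, Finset.sum_congr rfl (fun p _ => hE p)]
    simp [hQ, mul_comm]
  rw [hL, ← Finset.card_univ]
  refine Finset.card_le_card_of_injOn
    (fun x => ⟨fun i => ((x.2 i).2 : Finset (Fin n)), fun i => (x.2 i).1⟩) ?_ ?_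
  · rintro ⟨p, b⟩ -
    simp only [Finset.mem_coe, Finset.mem_sigma, Fintype.mem_piFinset, VC, Finset.mem_filter,
      Finset.mem_univ, true_and]
    refine ⟨fun i => (p (b i).1).2.1 (b i).2.2, fun v k => ?_⟩
    obtain ⟨f, hf, hu⟩ := (p k).2.2 v
    refine ⟨b.symm ⟨k, ⟨f, hf.1⟩⟩, by beta_reduce; rw [Equiv.apply_symm_apply]; exact ⟨rfl, hf.2⟩, ?_⟩
    rintro i ⟨hik, hvi⟩
    rw [Equiv.eq_symm_apply]
    generalize b i = x at hik hvi
    obtain ⟨k', f', hf'⟩ := x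
    simp only at hik hvi
    subst hik
    have := hu f' ⟨hf', hvi⟩
    subst this
    rfl
  · rintro ⟨p, b⟩ - ⟨p', b'⟩ - h
    simp only [Sigma.mk.injEq, heq_eq_eq] at h
    obtain ⟨he, hc⟩ := h
    have hp : ∀ (q : Fin 3 → Q) (d : Fin n ≃ Σ k, ((q k).1 : Finset (Finset (Fin n)))) (k) (f),
        f ∈ (q k).1 ↔ ∃ i, (d i).1 = k ∧ ((d i).2 : Finset (Fin n)) = f := by
      intro q d k f
      constructor
      · intro hf
        exact ⟨d.symm ⟨k, ⟨f, hf⟩⟩, by rw [Equiv.apply_symm_apply], by rw [Equiv.apply_symm_apply]⟩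
      · rintro ⟨i, rfl, rfl⟩
        exact (d i).2.2
    have hpp : p = p' := by
      funext k
      apply Subtype.ext
      ext f
      rw [hp p b, hp p' b']
      have h1 := fun i => congrFun he i
      have h2 := fun i => congrFun hc i
      simp only [h1, h2]
    subst hpp
    have : b = b' := by
      ext1 i
      have h1 := congrFun he i
      have h2 := congrFun hc i
      generalize b i = x at h1 h2
      generalize b' i = y at h1 h2
      obtain ⟨k, f, hf⟩ := x
      obtain ⟨k', f', hf'⟩ := y
      simp only at h1 h2
      subst h1
      subst h2
      rfl
    rw [this]

end Local

/-- For a simple 3-uniform hypergraph `G` on `n` vertices with `3 ∣ n`, the number of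
1-factors satisfies `φ(G) ≤ ((3/2^(3/2))^n · per M(G))^(1/3)`. -/
theorem stmt9 (n : ℕ) (hn : 3 ∣ n) (W : Finset (Finset (Fin n)))
    (huniform : ∀ e ∈ W, e.card = 3) :
    (numOneFactors W : ℝ) ≤
      (((3 : ℝ) / (2 : ℝ) ^ ((3 : ℝ) / 2)) ^ n * (mper (adjMatrix n 3 W) : ℝ)) ^
        ((1 : ℝ) / 3) := by
  set K : ℝ := (3 : ℝ) / (2 : ℝ) ^ ((3 : ℝ) / 2) with hK
  have hK0 : 0 ≤ K := by positivity
  have hK2 : K ^ 2 = 9 / 8 := by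
    rw [hK, div_pow, ← Real.rpow_natCast ((2:ℝ) ^ ((3 : ℝ) / 2)), ← Real.rpow_mul (by norm_num)]
    norm_num
  have hloc : ∀ e ∈ Fintype.piFinset (fun _ : Fin n => W),
      ((VC e).card : ℝ) ≤ K ^ n * (EC e).card := by
    intro e he
    rw [Fintype.mem_piFinset] at he
    have h := vc_le_ec e (fun i => huniform _ (he i))
    have h' : ((VC e).card : ℝ) ^ 2 * 8 ^ n ≤ 9 ^ n * ((EC e).card : ℝ) ^ 2 := by exact_mod_cast h
    refine (abs_le_of_sq_le_sq' ?_ (by positivity)).2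
    rw [mul_pow, ← pow_mul, mul_comm n 2, pow_mul, hK2, div_pow, div_mul_eq_mul_div,
      le_div_iff₀ (by positivity)]
    exact h'
  have h1 : (n.factorial : ℝ) * (numOneFactors W : ℝ) ^ 3 ≤
      ∑ e ∈ Fintype.piFinset (fun _ : Fin n => W), ((VC e).card : ℝ) := by
    exact_mod_cast vc_total W huniform
  have h2 : ∑ e ∈ Fintype.piFinset (fun _ : Fin n => W), ((EC e).card : ℝ) ≤
      (n.factorial : ℝ) * (mper (adjMatrix n 3 W) : ℝ) := by
    exact_mod_cast ec_total W
  have h3 : (n.factorial : ℝ) * (numOneFactors W : ℝ) ^ 3 ≤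
      (n.factorial : ℝ) * (K ^ n * (mper (adjMatrix n 3 W) : ℝ)) := by
    calc _ ≤ _ := h1
      _ ≤ ∑ e ∈ Fintype.piFinset (fun _ : Fin n => W), K ^ n * ((EC e).card : ℝ) :=
          Finset.sum_le_sum hloc
      _ = K ^ n * ∑ e ∈ Fintype.piFinset (fun _ : Fin n => W), ((EC e).card : ℝ) := by
          rw [Finset.mul_sum]
      _ ≤ K ^ n * ((n.factorial : ℝ) * (mper (adjMatrix n 3 W) : ℝ)) :=
          mul_le_mul_of_nonneg_left h2 (by positivity)
      _ = _ := by ring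
  have h4 : (numOneFactors W : ℝ) ^ 3 ≤ K ^ n * (mper (adjMatrix n 3 W) : ℝ) :=
    le_of_mul_le_mul_left h3 (by positivity)
  rw [one_div, Real.le_rpow_inv_iff_of_pos (by positivity) (by positivity) (by norm_num)]
  exact_mod_cast h4
end
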